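/- arXiv:1904.09347 — 4 statements merged into one kernel-verified Lean document; each statement's English description precedes it below -/
import Mathlib

section
/- Fix d ∈ ℕ and a, b ∈ [1,∞), and let f be the density on ℝ^d given by f(x) = C_{d,a,b} ‖x‖^{a−1} (1−‖x‖)^{b−1} 1{‖x‖ ≤ 1}, where C_{d,a,b} := Γ(a+b+d−1)/(d V_d Γ(a+d−1) Γ(b)). Then for any α, β > 0 and any λ ∈ (0, b/(b+d−1)), there exists C₀ > 0, depending only on d, a, b, α, β and λ, such that f ∈ 𝒢_{d,(α,β,λ,C)} for every C ≥ C₀. -/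
open MeasureTheory Filter Set
open scoped ENNReal NNReal BigOperators Topology

noncomputable section

/-- Euclidean space `ℝ^d`. -/
abbrev Euc (d : ℕ) := EuclideanSpace ℝ (Fin d)

/-- `V_d`, the Lebesgue measure of the unit Euclidean ball in `ℝ^d`. -/
def Vball (d : ℕ) : ℝ := Real.pi ^ ((d : ℝ) / 2) / Real.Gamma (1 + (d : ℝ) / 2)

/-- `f` is a probability density on `ℝ^d`. -/
def IsDensity {d : ℕ} (f : Euc d → ℝ) : Prop :=
  Measurable f ∧ (∀ x, 0 ≤ f x) ∧ (∫ x, f x) = 1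

/-- `β̲ = ⌈β⌉ - 1`. -/
def lfl (β : ℝ) : ℕ := ⌈β⌉₊ - 1

/-- The set of admissible constants in the definition of the local smoothness
functional `M_{f,β}(x)`. -/
def MSet {d : ℕ} (β : ℝ) (f : Euc d → ℝ) (x : Euc d) : Set ℝ :=
  {M : ℝ | 1 ≤ M ∧ 0 < f x ∧ ContDiffAt ℝ (lfl β : ℕ∞) f x ∧
    (∀ t : ℕ, 1 ≤ t → t ≤ lfl β →
      (‖iteratedFDeriv ℝ t f x‖ / f x) ^ ((t : ℝ)⁻¹) ≤ M) ∧
    ∀ y ∈ Metric.closedBall x ((2 * Real.sqrt d * M)⁻¹),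
      ∀ z ∈ Metric.closedBall x ((2 * Real.sqrt d * M)⁻¹), y ≠ z →
        (‖iteratedFDeriv ℝ (lfl β) f z - iteratedFDeriv ℝ (lfl β) f y‖ /
            (f x * ‖z - y‖ ^ (β - (lfl β : ℝ)))) ^ β⁻¹ ≤ M}

/-- The local smoothness functional `M_{f,β}(x)`, equal to `∞` when no admissible
constant exists. -/
def Mloc {d : ℕ} (β : ℝ) (f : Euc d → ℝ) (x : Euc d) : ℝ≥0∞ :=
  sInf (ENNReal.ofReal '' MSet β f x)

/-- `M_β(x) = max(M_{f,β}(x), M_{g,β}(x))`. -/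
def MlocPair {d : ℕ} (β : ℝ) (f g : Euc d → ℝ) (x : Euc d) : ℝ≥0∞ :=
  max (Mloc β f x) (Mloc β g x)

/-- The class `𝒢_{d,(α,β,λ,C)}` of densities. -/
def Gclass (d : ℕ) (α β lam C : ℝ) : Set (Euc d → ℝ) :=
  {f | IsDensity f ∧
    (∫⁻ x, ENNReal.ofReal (‖x‖ ^ α * f x)) ≤ ENNReal.ofReal C ∧
    (∀ x, f x ≤ C) ∧
    (∫⁻ x in {x | 0 < f x},
        ENNReal.ofReal (f x) * (Mloc β f x ^ (d : ℝ) / ENNReal.ofReal (f x)) ^ lam)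
      ≤ ENNReal.ofReal C}

/-- The support intersection `𝒳 = {x : f(x) > 0, g(x) > 0}`. -/
def suppXY {d : ℕ} (f g : Euc d → ℝ) : Set (Euc d) := {x | 0 < f x ∧ 0 < g x}

/-- The class `ℱ_{d,ϑ}` of pairs of densities, `ϑ = (α,β,λ₁,λ₂,γ,C)`. -/
def Fclass (d : ℕ) (α β lam1 lam2 γ C : ℝ) : Set ((Euc d → ℝ) × (Euc d → ℝ)) :=
  {p | p.1 ∈ Gclass d α β lam1 C ∧ IsDensity p.2 ∧
    (∫⁻ x, ENNReal.ofReal (‖x‖ ^ C⁻¹ * p.2 x)) ≤ ENNReal.ofReal C ∧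
    (∀ x, p.2 x ≤ C) ∧
    (∫⁻ x in suppXY p.1 p.2, ENNReal.ofReal (p.1 x ^ 2 * p.2 x ^ (-γ)))
      ≤ ENNReal.ofReal C ∧
    (∫⁻ x in suppXY p.1 p.2,
        ENNReal.ofReal (p.1 x) *
          ((MlocPair β p.1 p.2 x ^ (d : ℝ) / ENNReal.ofReal (p.1 x)) ^ lam1 +
            (MlocPair β p.1 p.2 x ^ (d : ℝ) / ENNReal.ofReal (p.2 x)) ^ lam2))
      ≤ ENNReal.ofReal C}

/-- `φ_{jl} = ∂^{j+l} φ / ∂u^j ∂v^l`. -/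
def phiD {d : ℕ} (φ : ℝ → ℝ → Euc d → ℝ) (j l : ℕ) (u v : ℝ) (x : Euc d) : ℝ :=
  iteratedDeriv j (fun u' => iteratedDeriv l (fun v' => φ u' v' x) v) u

/-- The class `Φ(ξ)` of smooth functionals, `ξ = (κ₁,κ₂,β₁*,β₂*,L)`. -/
def PhiClass (d : ℕ) (κ1 κ2 b1 b2 L : ℝ) : Set (ℝ → ℝ → Euc d → ℝ) :=
  {φ |
    (∀ u v : ℝ, 0 < u → 0 < v → ∀ x : Euc d,
      ContDiffAt ℝ (lfl b2 : ℕ∞) (fun v' => φ u v' x) v) ∧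
    (∀ l2 : ℕ, l2 ≤ lfl b2 → ∀ u v : ℝ, 0 < u → 0 < v → ∀ x : Euc d,
      ContDiffAt ℝ (lfl b1 : ℕ∞) (fun u' => iteratedDeriv l2 (fun v' => φ u' v' x) v) u) ∧
    (∀ u v : ℝ, 0 < u → 0 < v → ∀ x : Euc d, ∀ e1 e2 : ℝ, |e1| < L⁻¹ → |e2| < L⁻¹ →
      |φ (u * (1 + e1)) (v * (1 + e2)) x -
          ∑ l1 ∈ Finset.range (lfl b1 + 1), ∑ l2 ∈ Finset.range (lfl b2 + 1),
            (u * e1) ^ l1 * (v * e2) ^ l2 /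
                ((Nat.factorial l1 : ℝ) * (Nat.factorial l2 : ℝ)) *
              phiD φ l1 l2 u v x| ≤
        L * max (u ^ (-κ1)) (u ^ L) * max (v ^ (-κ2)) (v ^ L) *
          (|e1| ^ b1 + |e2| ^ b2)) ∧
    (∀ u v : ℝ, 0 < u → 0 < v → ∀ x : Euc d, ∀ l1 l2 : ℕ, l1 ≤ lfl b1 → l2 ≤ lfl b2 →
      |u ^ l1 * v ^ l2 * phiD φ l1 l2 u v x| ≤
        L * max (u ^ (-κ1)) (u ^ L) * max (v ^ (-κ2)) (v ^ L)) ∧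
    (∀ η : ℝ, 0 < η → ∃ r : ℝ, 0 < r ∧ ∀ e3 : Euc d, ‖e3‖ ≤ r →
      ∀ u v : ℝ, 0 < u → 0 < v → ∀ x : Euc d,
        |φ u v (x + e3) / φ u v x - 1| ≤ η ∧
        |phiD φ 1 0 u v (x + e3) / phiD φ 1 0 u v x - 1| ≤ η ∧
        |phiD φ 0 1 u v (x + e3) / phiD φ 0 1 u v x - 1| ≤ η)}

/-- Distance from `X i` to its `k`-th nearest neighbour in `{X j : j ≠ i}`. -/
def nnDistX {d m : ℕ} (k : ℕ) (X : Fin m → Euc d) (i : Fin m) : ℝ :=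
  sInf {r : ℝ | 0 ≤ r ∧
    k ≤ ((Finset.univ.erase i).filter fun j => dist (X j) (X i) ≤ r).card}

/-- Distance from `x` to its `k`-th nearest neighbour in `{Y j}`. -/
def nnDistY {d n : ℕ} (k : ℕ) (Y : Fin n → Euc d) (x : Euc d) : ℝ :=
  sInf {r : ℝ | 0 ≤ r ∧ k ≤ (Finset.univ.filter fun j => dist (Y j) x ≤ r).card}

/-- `f̂_{(kX),i}`. -/
def fhat {d m : ℕ} (kX : ℕ) (X : Fin m → Euc d) (i : Fin m) : ℝ :=
  (kX : ℝ) / (m * Vball d * nnDistX kX X i ^ d)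

/-- `ĝ_{(kY)}` evaluated at `x`. -/
def ghat {d n : ℕ} (kY : ℕ) (Y : Fin n → Euc d) (x : Euc d) : ℝ :=
  (kY : ℝ) / (n * Vball d * nnDistY kY Y x ^ d)

/-- The naive nearest-neighbour estimator `T̃_{m,n,kX,kY}`. -/
def Tnaive {d m n : ℕ} (kX kY : ℕ) (φ : ℝ → ℝ → Euc d → ℝ)
    (X : Fin m → Euc d) (Y : Fin n → Euc d) : ℝ :=
  (m : ℝ)⁻¹ * ∑ i : Fin m, φ (fhat kX X i) (ghat kY Y (X i)) (X i)

/-- The weight class `𝒲^{(k)}_{I,c}` (weights `w_1,…,w_k` indexed by `Fin k`). -/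
def Wclass (d k I : ℕ) (c : ℝ) : Set (Fin k → ℝ) :=
  {w | (∑ j, w j) = 1 ∧
    (∀ j : Fin k, ((j : ℕ) : ℝ) + 1 < c * k → w j = 0) ∧
    ∀ l i : ℕ, l ≤ ⌈(d : ℝ) / 2⌉₊ - 1 → i ≤ I → ¬(l = 0 ∧ i = 0) →
      (∑ j : Fin k, (((j : ℕ) : ℝ) + 1) ^ (2 * (l : ℝ) / d - (i : ℝ)) * w j) = 0}

/-- The weighted estimator `T̂_{m,n}^{w_X,w_Y}`. -/
def Twt {d m n : ℕ} (kX kY : ℕ) (wX : Fin kX → ℝ) (wY : Fin kY → ℝ)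
    (φ : ℝ → ℝ → Euc d → ℝ) (X : Fin m → Euc d) (Y : Fin n → Euc d) : ℝ :=
  ∑ jX : Fin kX, ∑ jY : Fin kY,
    wX jX * wY jY * Tnaive ((jX : ℕ) + 1) ((jY : ℕ) + 1) φ X Y

/-- The probability measure on `ℝ^d` with Lebesgue density `f`. -/
def densMeasure {d : ℕ} (f : Euc d → ℝ) : Measure (Euc d) :=
  volume.withDensity fun x => ENNReal.ofReal (f x)

/-- The joint law of the sample `((X_1,…,X_m),(Y_1,…,Y_n))` with `X_i ~ f`, `Y_j ~ g`,
all independent. -/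
def sampleMeasure {d : ℕ} (m n : ℕ) (f g : Euc d → ℝ) :
    Measure ((Fin m → Euc d) × (Fin n → Euc d)) :=
  (Measure.pi fun _ : Fin m => densMeasure f).prod (Measure.pi fun _ : Fin n => densMeasure g)

/-- Variance of `h` under `μ`. -/
def varAgainst {Ω : Type*} [MeasurableSpace Ω] (μ : Measure Ω) (h : Ω → ℝ) : ℝ :=
  ∫ x, (h x - ∫ y, h y ∂μ) ^ 2 ∂μ

/-- The functional `T(f,g) = ∫_𝒳 f φ(f,g,·)`. -/
def Tfunc {d : ℕ} (φ : ℝ → ℝ → Euc d → ℝ) (f g : Euc d → ℝ) : ℝ :=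
  ∫ x in suppXY f g, f x * φ (f x) (g x) x

/-- `v₁(f,g) = Var(φ_{X₁} + (fφ₁₀)_{X₁})`. -/
def v1func {d : ℕ} (φ : ℝ → ℝ → Euc d → ℝ) (f g : Euc d → ℝ) : ℝ :=
  varAgainst (densMeasure f) fun x => φ (f x) (g x) x + f x * phiD φ 1 0 (f x) (g x) x

/-- `v₂(f,g) = Var((fφ₀₁)_{Y₁})`. -/
def v2func {d : ℕ} (φ : ℝ → ℝ → Euc d → ℝ) (f g : Euc d → ℝ) : ℝ :=
  varAgainst (densMeasure g) fun y => f y * phiD φ 0 1 (f y) (g y) y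

/-- `ζ = κ₁/λ₁ + κ₂/λ₂ + d(κ₁+κ₂)/α`. -/
def zetaPar (d : ℕ) (α lam1 lam2 κ1 κ2 : ℝ) : ℝ :=
  κ1 / lam1 + κ2 / lam2 + d * (κ1 + κ2) / α

/-- `τ₁`. -/
def tau1Par (d : ℕ) (α β lam1 lam2 κ1 κ2 b1 : ℝ) : ℝ :=
  1 - max (max ((d : ℝ) / (2 * β)) ((d : ℝ) / (2 * min 2 β + d)))
      (max ((d : ℝ) / (4 * b1)) (1 / (2 * lam1 * (1 - zetaPar d α lam1 lam2 κ1 κ2))))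

/-- `τ₂`. -/
def tau2Par (d : ℕ) (α β lam1 lam2 κ1 κ2 b2 : ℝ) : ℝ :=
  1 - max (max ((d : ℝ) / (2 * β)) ((d : ℝ) / (2 * min 2 β + d)))
      (max ((d : ℝ) / (4 * b2)) (1 / (2 * lam2 * (1 - zetaPar d α lam1 lam2 κ1 κ2))))

/-- `γ_* = (2α+d)(1+2κ₂)/(2α+d−2(α+d)κ₁)`. -/
def gammaStar (d : ℕ) (α κ1 κ2 : ℝ) : ℝ :=
  (2 * α + d) * (1 + 2 * κ2) / (2 * α + d - 2 * (α + d) * κ1)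


lemma aux_norm_deriv (d : ℕ) (i : ℕ) : ∃ D : ℝ, 1 ≤ D ∧ ∀ w : Euc d, w ≠ 0 →
    ‖iteratedFDeriv ℝ i (fun y : Euc d => ‖y‖) w‖ * ‖w‖ ^ i ≤ D * ‖w‖ := by
  have hc : ContinuousOn (iteratedFDeriv ℝ i (fun y : Euc d => ‖y‖)) (Metric.sphere 0 1) := by
    intro w hw
    have hw0 : w ≠ 0 := by
      rintro rfl; simp at hw
    exact (ContDiffAt.continuousAt_iteratedFDeriv (n := i) (contDiffAt_norm ℝ hw0)
      le_rfl).continuousWithinAt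
  obtain ⟨C, hC⟩ := (isCompact_sphere (0 : Euc d) 1).exists_bound_of_continuousOn hc
  refine ⟨max C 1, le_max_right _ _, fun w hw => ?_⟩
  have hr : 0 < ‖w‖ := norm_pos_iff.2 hw
  set c := ‖w‖⁻¹ with hcdef
  have hc0 : 0 < c := inv_pos.2 hr
  let g : Euc d ≃L[ℝ] Euc d := ContinuousLinearEquiv.smulLeft (Units.mk0 c hc0.ne')
  have hg : ∀ y, g y = c • y := fun y => rfl
  have h1 := g.iteratedFDerivWithin_comp_right (fun y : Euc d => ‖y‖) uniqueDiffOn_univ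
    (mem_univ (g w)) i
  rw [preimage_univ, iteratedFDerivWithin_univ, iteratedFDerivWithin_univ] at h1
  have h2 : (fun y : Euc d => ‖y‖) ∘ g = c • (fun y : Euc d => ‖y‖) := by
    ext y
    simp [hg, norm_smul, abs_of_pos hc0]
  rw [h2, iteratedFDeriv_const_smul_apply (contDiffAt_norm ℝ hw)] at h1
  have h3 : c * ‖iteratedFDeriv ℝ i (fun y : Euc d => ‖y‖) w‖ ≤ max C 1 * c ^ i := by
    have h4 : ‖c • iteratedFDeriv ℝ i (fun y : Euc d => ‖y‖) w‖ =
        c * ‖iteratedFDeriv ℝ i (fun y : Euc d => ‖y‖) w‖ := by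
      rw [norm_smul, Real.norm_of_nonneg hc0.le]
    rw [← h4, h1]
    refine (ContinuousMultilinearMap.norm_compContinuousLinearMap_le _ _).trans ?_
    simp only [Finset.prod_const, Finset.card_univ, Fintype.card_fin]
    have h5 : ‖(g : Euc d →L[ℝ] Euc d)‖ ≤ c := by
      refine ContinuousLinearMap.opNorm_le_bound _ hc0.le fun y => ?_
      simp [hg, norm_smul, abs_of_pos hc0]
    have h6 : g w ∈ Metric.sphere (0 : Euc d) 1 := by
      simp [hg, norm_smul, abs_of_pos hc0, hcdef, hr.ne']
    have h7 := (hC _ h6).trans (le_max_left C 1)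
    gcongr
  have h8 : c * ‖w‖ = 1 := by rw [hcdef]; field_simp
  have h9 : c ^ i * ‖w‖ ^ i = 1 := by rw [← mul_pow, h8, one_pow]
  calc ‖iteratedFDeriv ℝ i (fun y : Euc d => ‖y‖) w‖ * ‖w‖ ^ i
      = (c * ‖iteratedFDeriv ℝ i (fun y : Euc d => ‖y‖) w‖) * (‖w‖ ^ i * ‖w‖) := by
        linear_combination (-‖iteratedFDeriv ℝ i (fun y : Euc d => ‖y‖) w‖ * ‖w‖ ^ i) * h8
    _ ≤ (max C 1 * c ^ i) * (‖w‖ ^ i * ‖w‖) := by gcongr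
    _ = max C 1 * ‖w‖ := by linear_combination (max C 1 * ‖w‖) * h9

lemma aux_pow (d : ℕ) (q : ℝ) (n : ℕ) : ∃ C : ℝ, 0 ≤ C ∧
    ∀ (F : Euc d → ℝ) (U : Set (Euc d)) (w : Euc d) (D δ : ℝ), IsOpen U → w ∈ U →
      ContDiffOn ℝ n F U → (∀ y ∈ U, 0 < F y) → 0 < δ → δ ≤ F w →
      (∀ i, 1 ≤ i → i ≤ n → ‖iteratedFDeriv ℝ i F w‖ ≤ (D / δ) ^ i * δ) →
      ‖iteratedFDeriv ℝ n (fun y => F y ^ q) w‖ ≤ C * F w ^ q * (D / δ) ^ n := by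
  refine ⟨n.factorial * ∑ i ∈ Finset.range (n + 1), |(descPochhammer ℝ i).eval q|, by positivity, ?_⟩
  intro F U w D δ hU hw hF hpos hδ hδF hD
  have hFw := hpos w hw
  have key := norm_iteratedFDerivWithin_comp_le (n := n) (N := n) (s := U) (t := Ioi (0 : ℝ))
    (f := δ⁻¹ • F) (g := (δ ^ q) • fun v : ℝ => v ^ q) (x := w)
    (C := (∑ i ∈ Finset.range (n + 1), |(descPochhammer ℝ i).eval q|) * F w ^ q) (D := D / δ)
    (𝕜 := ℝ) ?_ ?_ le_rfl
    isOpen_Ioi.uniqueDiffOn hU.uniqueDiffOn ?_ hw ?_ ?_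
  · rw [iteratedFDerivWithin_of_isOpen n hU hw] at key
    have he : (fun y => F y ^ q) =ᶠ[𝓝 w] ((δ ^ q) • fun v : ℝ => v ^ q) ∘ (δ⁻¹ • F) := by
      filter_upwards [hU.mem_nhds hw] with y hy
      have := hpos y hy
      simp only [Function.comp, Pi.smul_apply, smul_eq_mul]
      rw [← Real.mul_rpow hδ.le (by positivity)]
      congr 1
      field_simp
    rw [(he.iteratedFDeriv ℝ n).eq_of_nhds]
    refine key.trans (le_of_eq ?_)
    ring
  · intro v hv
    exact (ContDiffAt.const_smul (δ ^ q)
      (Real.contDiffAt_rpow_const_of_ne (p := q) (ne_of_gt hv))).contDiffWithinAt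
  · exact ContDiffOn.const_smul δ⁻¹ hF
  · intro y hy
    have := hpos y hy
    simp only [Pi.smul_apply, smul_eq_mul, mem_Ioi]
    positivity
  · intro i hi
    have hv1 : 1 ≤ (δ⁻¹ • F) w := by
      simp only [Pi.smul_apply, smul_eq_mul]
      rw [inv_mul_eq_div, one_le_div hδ]; exact hδF
    have hv0 : (δ⁻¹ • F) w ∈ Ioi (0 : ℝ) := lt_of_lt_of_le one_pos hv1
    rw [iteratedFDerivWithin_of_isOpen i isOpen_Ioi hv0,
      iteratedFDeriv_const_smul_apply (Real.contDiffAt_rpow_const_of_ne (ne_of_gt hv0)),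
      norm_smul, norm_iteratedFDeriv_eq_norm_iteratedDeriv, iteratedDeriv_eq_iterate,
      Real.iter_deriv_rpow_const, norm_mul, Real.norm_of_nonneg (Real.rpow_nonneg hδ.le q),
      Real.norm_eq_abs, Real.norm_of_nonneg (Real.rpow_nonneg (le_of_lt hv0) _)]
    have e1 : ((δ⁻¹ • F) w) ^ (q - i) ≤ ((δ⁻¹ • F) w) ^ q :=
      Real.rpow_le_rpow_of_exponent_le hv1 (by simp)
    have e2 : |(descPochhammer ℝ i).eval q| ≤
        ∑ i ∈ Finset.range (n + 1), |(descPochhammer ℝ i).eval q| :=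
      Finset.single_le_sum (f := fun i => |(descPochhammer ℝ i).eval q|)
        (fun _ _ => abs_nonneg _) (Finset.mem_range.2 (by omega))
    have e3 : δ ^ q * ((δ⁻¹ • F) w) ^ q = F w ^ q := by
      rw [← Real.mul_rpow hδ.le (le_of_lt hv0)]
      congr 1
      simp only [Pi.smul_apply, smul_eq_mul]
      field_simp
    have hδq := Real.rpow_nonneg hδ.le q
    have hFq := Real.rpow_nonneg hFw.le q
    calc _ ≤ δ ^ q * (|(descPochhammer ℝ i).eval q| * ((δ⁻¹ • F) w) ^ q) := by gcongr
      _ = |(descPochhammer ℝ i).eval q| * F w ^ q := by rw [← e3]; ring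
      _ ≤ _ := by gcongr
  · intro i h1 hi
    rw [iteratedFDerivWithin_of_isOpen i hU hw, iteratedFDeriv_const_smul_apply
      ((hF.contDiffAt (hU.mem_nhds hw)).of_le (by exact_mod_cast hi)), norm_smul,
      Real.norm_of_nonneg (by positivity)]
    calc _ ≤ δ⁻¹ * ((D / δ) ^ i * δ) := by gcongr; exact hD i h1 hi
      _ = _ := by field_simp

/-- punctured open unit ball -/
def auxU (d : ℕ) : Set (Euc d) := {w | 0 < ‖w‖ ∧ ‖w‖ < 1}

lemma auxU_open (d : ℕ) : IsOpen (auxU d) :=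
  (isOpen_lt continuous_const continuous_norm).inter (isOpen_lt continuous_norm continuous_const)

lemma aux_smooth1 (d n : ℕ) : ContDiffOn ℝ n (fun y : Euc d => ‖y‖) (auxU d) := fun y hy =>
  (contDiffAt_norm ℝ (norm_pos_iff.1 hy.1)).contDiffWithinAt

lemma aux_smooth2 (d n : ℕ) : ContDiffOn ℝ n (fun y : Euc d => 1 - ‖y‖) (auxU d) :=
  contDiffOn_const.sub (aux_smooth1 d n)

lemma aux_smoothp (d n : ℕ) (p : ℝ) : ContDiffOn ℝ n (fun y : Euc d => ‖y‖ ^ p) (auxU d) :=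
  (aux_smooth1 d n).rpow_const_of_ne fun y hy => hy.1.ne'

lemma aux_smoothq (d n : ℕ) (q : ℝ) : ContDiffOn ℝ n (fun y : Euc d => (1 - ‖y‖) ^ q) (auxU d) :=
  (aux_smooth2 d n).rpow_const_of_ne fun y hy => (sub_pos.2 hy.2).ne'

lemma aux_bounds (d : ℕ) (p q : ℝ) (n : ℕ) : ∃ A : ℝ, 0 ≤ A ∧ ∀ w ∈ auxU d,
    ‖iteratedFDeriv ℝ n (fun y : Euc d => ‖y‖ ^ p) w‖ ≤
      A * ‖w‖ ^ p * ((‖w‖ * (1 - ‖w‖))⁻¹) ^ n ∧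
    ‖iteratedFDeriv ℝ n (fun y : Euc d => (1 - ‖y‖) ^ q) w‖ ≤
      A * (1 - ‖w‖) ^ q * ((‖w‖ * (1 - ‖w‖))⁻¹) ^ n := by
  choose D hD1 hD using aux_norm_deriv d
  obtain ⟨Cp, hCp0, hCp⟩ := aux_pow d p n
  obtain ⟨Cq, hCq0, hCq⟩ := aux_pow d q n
  set E := ∑ i ∈ Finset.range (n + 1), D i with hE
  have hDE : ∀ i ≤ n, D i ≤ E := fun i hi =>
    Finset.single_le_sum (f := D) (fun j _ => zero_le_one.trans (hD1 j))
      (Finset.mem_range.2 (by omega))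
  have hE1 : 1 ≤ E := (hD1 0).trans (hDE 0 (by omega))
  refine ⟨(Cp + Cq) * E ^ n, by positivity, fun w hw => ?_⟩
  have hr := hw.1
  have hr1 : 0 < 1 - ‖w‖ := sub_pos.2 hw.2
  set δ := ‖w‖ * (1 - ‖w‖) with hδ
  have hδ0 : 0 < δ := by positivity
  have hδr : δ ≤ ‖w‖ := by nlinarith
  have hδr1 : δ ≤ 1 - ‖w‖ := by nlinarith
  have hb : ∀ i, 1 ≤ i → i ≤ n → ‖iteratedFDeriv ℝ i (fun y : Euc d => ‖y‖) w‖ ≤ (E / δ) ^ i * δ := by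
    intro i h1 hi
    have h := hD i w (norm_pos_iff.1 hr)
    obtain ⟨j, rfl⟩ : ∃ j, i = j + 1 := ⟨i - 1, by omega⟩
    have h2 : ‖iteratedFDeriv ℝ (j + 1) (fun y : Euc d => ‖y‖) w‖ * ‖w‖ ^ j ≤ D (j + 1) := by
      rw [pow_succ, ← mul_assoc] at h
      exact le_of_mul_le_mul_right h hr
    have h3 : ‖iteratedFDeriv ℝ (j + 1) (fun y : Euc d => ‖y‖) w‖ * δ ^ j ≤ E ^ (j + 1) := by
      calc _ ≤ ‖iteratedFDeriv ℝ (j + 1) (fun y : Euc d => ‖y‖) w‖ * ‖w‖ ^ j := by gcongr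
        _ ≤ D (j + 1) := h2
        _ ≤ E := hDE _ hi
        _ ≤ E ^ (j + 1) := le_self_pow₀ hE1 (by omega)
    have h4 : (E / δ) ^ (j + 1) * δ = E ^ (j + 1) / δ ^ j := by
      rw [div_pow, pow_succ δ]; field_simp
    rw [h4, le_div_iff₀ (by positivity)]
    exact h3
  have hb2 : ∀ i, 1 ≤ i → i ≤ n →
      ‖iteratedFDeriv ℝ i (fun y : Euc d => 1 - ‖y‖) w‖ ≤ (E / δ) ^ i * δ := by
    intro i h1 hi
    refine le_trans (le_of_eq ?_) (hb i h1 hi)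
    have hcd : ContDiffAt ℝ i (fun y : Euc d => ‖y‖) w := contDiffAt_norm ℝ (norm_pos_iff.1 hr)
    have : (fun y : Euc d => 1 - ‖y‖) = (fun _ => (1 : ℝ)) + (-1 : ℝ) • (fun y : Euc d => ‖y‖) := by
      ext y; simp; ring
    rw [this, iteratedFDeriv_add_apply (g := (-1 : ℝ) • (fun y : Euc d => ‖y‖)) contDiffAt_const
      (ContDiffAt.const_smul (-1 : ℝ) hcd),
      iteratedFDeriv_const_smul_apply hcd, iteratedFDeriv_const_of_ne (by omega)]
    simp
  have hX := hCp _ (auxU d) w E δ (auxU_open d) hw (aux_smooth1 d n) (fun y hy => hy.1) hδ0 hδr hb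
  have hY := hCq _ (auxU d) w E δ (auxU_open d) hw (aux_smooth2 d n)
    (fun y hy => sub_pos.2 hy.2) hδ0 hδr1 hb2
  have hp := Real.rpow_nonneg hr.le p
  have hq := Real.rpow_nonneg hr1.le q
  have hn : 0 ≤ (E / δ) ^ n := by positivity
  constructor
  · refine hX.trans ?_
    calc Cp * ‖w‖ ^ p * (E / δ) ^ n ≤ (Cp + Cq) * ‖w‖ ^ p * (E / δ) ^ n := by
          gcongr; linarith
      _ = _ := by rw [div_eq_mul_inv, mul_pow]; ring
  · refine hY.trans ?_
    calc Cq * (1 - ‖w‖) ^ q * (E / δ) ^ n ≤ (Cp + Cq) * (1 - ‖w‖) ^ q * (E / δ) ^ n := by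
          gcongr; linarith
      _ = _ := by rw [div_eq_mul_inv, mul_pow]; ring

lemma aux_prod (d : ℕ) (p q : ℝ) (n : ℕ) : ∃ A : ℝ, 0 ≤ A ∧ ∀ w ∈ auxU d,
    ‖iteratedFDeriv ℝ n (fun y : Euc d => ‖y‖ ^ p * (1 - ‖y‖) ^ q) w‖ ≤
      A * (‖w‖ ^ p * (1 - ‖w‖) ^ q) * ((‖w‖ * (1 - ‖w‖))⁻¹) ^ n := by
  choose A hA0 hA using aux_bounds d p q
  refine ⟨∑ i ∈ Finset.range (n + 1), (n.choose i : ℝ) * A i * A (n - i),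
    Finset.sum_nonneg fun i _ => by have := hA0 i; have := hA0 (n - i); positivity, fun w hw => ?_⟩
  have hr := hw.1
  have hr1 : 0 < 1 - ‖w‖ := sub_pos.2 hw.2
  have key := norm_iteratedFDerivWithin_mul_le (aux_smoothp d n p) (aux_smoothq d n q)
    (auxU_open d).uniqueDiffOn hw (n := n) le_rfl
  rw [iteratedFDerivWithin_of_isOpen n (auxU_open d) hw] at key
  refine key.trans ?_
  rw [Finset.sum_mul, Finset.sum_mul]
  refine Finset.sum_le_sum fun i hi => ?_
  have hin : i ≤ n := by have := Finset.mem_range.1 hi; omega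
  rw [iteratedFDerivWithin_of_isOpen i (auxU_open d) hw,
    iteratedFDerivWithin_of_isOpen (n - i) (auxU_open d) hw]
  have h1 := (hA i w hw).1
  have h2 := (hA (n - i) w hw).2
  have := hA0 i
  have := hA0 (n - i)
  have hp := Real.rpow_nonneg hr.le p
  have hq := Real.rpow_nonneg hr1.le q
  set e := (‖w‖ * (1 - ‖w‖))⁻¹ with he
  have he0 : 0 ≤ e := by positivity
  calc _ ≤ (n.choose i : ℝ) * (A i * ‖w‖ ^ p * e ^ i) * (A (n - i) * (1 - ‖w‖) ^ q * e ^ (n - i)) := by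
        gcongr
    _ = (n.choose i : ℝ) * A i * A (n - i) * (‖w‖ ^ p * (1 - ‖w‖) ^ q) * (e ^ i * e ^ (n - i)) := by ring
    _ = _ := by rw [← pow_add, Nat.add_sub_cancel' hin]

/-- the density with abstract constants -/
def auxf (d : ℕ) (c p q : ℝ) (x : Euc d) : ℝ :=
  if ‖x‖ ≤ 1 then c * ‖x‖ ^ p * (1 - ‖x‖) ^ q else 0

lemma auxf_eq {d : ℕ} {c p q : ℝ} {x : Euc d} (hx : x ∈ auxU d) :
    auxf d c p q x = c * (‖x‖ ^ p * (1 - ‖x‖) ^ q) := by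
  rw [auxf, if_pos hx.2.le, mul_assoc]

lemma auxf_pos {d : ℕ} {c p q : ℝ} (hc : 0 < c) {x : Euc d} (hx : x ∈ auxU d) :
    0 < auxf d c p q x := by
  rw [auxf_eq hx]
  exact mul_pos hc (mul_pos (Real.rpow_pos_of_pos hx.1 _)
    (Real.rpow_pos_of_pos (sub_pos.2 hx.2) _))

lemma auxf_eventually {d : ℕ} {c p q : ℝ} {x : Euc d} (hx : x ∈ auxU d) :
    auxf d c p q =ᶠ[𝓝 x] c • (fun y : Euc d => ‖y‖ ^ p * (1 - ‖y‖) ^ q) := by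
  filter_upwards [(auxU_open d).mem_nhds hx] with y hy
  simp [auxf_eq hy]

lemma auxf_smooth {d : ℕ} {c p q : ℝ} (n : ℕ) {x : Euc d} (hx : x ∈ auxU d) :
    ContDiffAt ℝ n (auxf d c p q) x := by
  refine ContDiffAt.congr_of_eventuallyEq ?_ (auxf_eventually hx)
  refine ContDiffAt.const_smul c ?_
  exact ((aux_smoothp d n p).mul (aux_smoothq d n q)).contDiffAt ((auxU_open d).mem_nhds hx)

lemma auxf_deriv (d : ℕ) (c p q : ℝ) (hc : 0 < c) (n : ℕ) : ∃ A : ℝ, 0 ≤ A ∧ ∀ w ∈ auxU d,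
    ‖iteratedFDeriv ℝ n (auxf d c p q) w‖ ≤
      A * auxf d c p q w * ((‖w‖ * (1 - ‖w‖))⁻¹) ^ n := by
  obtain ⟨A, hA0, hA⟩ := aux_prod d p q n
  refine ⟨A, hA0, fun w hw => ?_⟩
  rw [((auxf_eventually hw).iteratedFDeriv ℝ n).eq_of_nhds, iteratedFDeriv_const_smul_apply
    (((aux_smoothp d n p).mul (aux_smoothq d n q)).contDiffAt ((auxU_open d).mem_nhds hw)),
    norm_smul, Real.norm_of_nonneg hc.le, auxf_eq hw]
  calc _ ≤ c * (A * (‖w‖ ^ p * (1 - ‖w‖) ^ q) * ((‖w‖ * (1 - ‖w‖))⁻¹) ^ n) := by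
        gcongr; exact hA w hw
    _ = _ := by ring

lemma aux_near {d : ℕ} {x w : Euc d} (hx : x ∈ auxU d)
    (hw : ‖w - x‖ ≤ ‖x‖ * (1 - ‖x‖) / 2) :
    w ∈ auxU d ∧ ‖w‖ ≤ 2 * ‖x‖ ∧ 1 - ‖w‖ ≤ 2 * (1 - ‖x‖) ∧
      ‖x‖ * (1 - ‖x‖) / 4 ≤ ‖w‖ * (1 - ‖w‖) := by
  obtain ⟨h0, h1⟩ := hx
  have h2 := abs_le.1 ((abs_norm_sub_norm_le w x).trans hw)
  have h3 : 0 < 1 - ‖x‖ := by linarith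
  have h4 : ‖x‖ / 2 ≤ ‖w‖ := by nlinarith
  have h5 : (1 - ‖x‖) / 2 ≤ 1 - ‖w‖ := by nlinarith
  refine ⟨⟨by linarith, by linarith⟩, by nlinarith, by nlinarith, ?_⟩
  calc _ = (‖x‖ / 2) * ((1 - ‖x‖) / 2) := by ring
    _ ≤ _ := by gcongr

lemma auxf_deriv_near (d : ℕ) (c p q : ℝ) (hc : 0 < c) (hp : 0 ≤ p) (hq : 0 ≤ q) (n : ℕ) :
    ∃ A : ℝ, 0 ≤ A ∧ ∀ x ∈ auxU d, ∀ w, ‖w - x‖ ≤ ‖x‖ * (1 - ‖x‖) / 2 →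
    ‖iteratedFDeriv ℝ n (auxf d c p q) w‖ ≤
      A * auxf d c p q x * ((‖x‖ * (1 - ‖x‖))⁻¹) ^ n := by
  obtain ⟨A, hA0, hA⟩ := auxf_deriv d c p q hc n
  refine ⟨A * (2 ^ p * 2 ^ q) * 4 ^ n, by positivity, fun x hx w hw => ?_⟩
  obtain ⟨hwU, h1, h2, h3⟩ := aux_near hx hw
  have hx0 := hx.1
  have hx1 : 0 < 1 - ‖x‖ := sub_pos.2 hx.2
  have hw0 := hwU.1
  have hw1 : 0 < 1 - ‖w‖ := sub_pos.2 hwU.2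
  have hf : auxf d c p q w ≤ (2 ^ p * 2 ^ q) * auxf d c p q x := by
    rw [auxf_eq hwU, auxf_eq hx]
    calc _ ≤ c * ((2 * ‖x‖) ^ p * (2 * (1 - ‖x‖)) ^ q) := by gcongr
      _ = _ := by
        rw [Real.mul_rpow (by norm_num) hx0.le, Real.mul_rpow (by norm_num) hx1.le]; ring
  have he : (‖w‖ * (1 - ‖w‖))⁻¹ ≤ 4 * (‖x‖ * (1 - ‖x‖))⁻¹ := by
    have : 4 * (‖x‖ * (1 - ‖x‖))⁻¹ = (‖x‖ * (1 - ‖x‖) / 4)⁻¹ := by rw [inv_div]; ring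
    rw [this]
    exact inv_anti₀ (by positivity) h3
  have hfx := (auxf_pos (p := p) (q := q) hc hx).le
  have hfw := (auxf_pos (p := p) (q := q) hc hwU).le
  calc _ ≤ A * auxf d c p q w * ((‖w‖ * (1 - ‖w‖))⁻¹) ^ n := hA w hwU
    _ ≤ A * ((2 ^ p * 2 ^ q) * auxf d c p q x) * (4 * (‖x‖ * (1 - ‖x‖))⁻¹) ^ n := by gcongr
    _ = _ := by rw [mul_pow]; ring

lemma aux_lfl {β : ℝ} (hβ : 0 < β) : (lfl β : ℝ) < β ∧ β ≤ lfl β + 1 := by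
  have h1 : 0 < ⌈β⌉₊ := Nat.ceil_pos.2 hβ
  have h2 : ⌈β⌉₊ = lfl β + 1 := by unfold lfl; omega
  constructor
  · exact Nat.lt_ceil.1 (by omega)
  · have := Nat.le_ceil β
    rw [h2] at this
    exact_mod_cast this

lemma aux_MSet (d : ℕ) (hd : 0 < d) (c p q β : ℝ) (hc : 0 < c) (hp : 0 ≤ p) (hq : 0 ≤ q)
    (hβ : 0 < β) : ∃ K : ℝ, 1 ≤ K ∧ ∀ x ∈ auxU d,
      K * (‖x‖ * (1 - ‖x‖))⁻¹ ∈ MSet β (auxf d c p q) x := by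
  choose A hA0 hA using auxf_deriv_near d c p q hc hp hq
  obtain ⟨hm1, hm2⟩ := aux_lfl hβ
  set m := lfl β with hm
  have hS0 : 0 ≤ ∑ t ∈ Finset.range (m + 1), A t := Finset.sum_nonneg fun t _ => hA0 t
  have hB0 : 0 ≤ A (m + 1) ^ β⁻¹ := Real.rpow_nonneg (hA0 _) _
  set K := 1 + ∑ t ∈ Finset.range (m + 1), A t + A (m + 1) ^ β⁻¹ with hK
  have hK1 : 1 ≤ K := by linarith
  have hKt : ∀ t ≤ m, A t ≤ K := fun t ht => by
    have := Finset.single_le_sum (f := A) (fun j _ => hA0 j) (Finset.mem_range.2 (by omega : t < m + 1))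
    linarith
  have hKb : A (m + 1) ≤ K ^ β := by
    rw [← Real.rpow_inv_le_iff_of_pos (hA0 _) (by linarith) hβ]; linarith
  refine ⟨K, hK1, fun x hx => ?_⟩
  have hx0 := hx.1
  have hx1 : 0 < 1 - ‖x‖ := sub_pos.2 hx.2
  have hfx := auxf_pos (p := p) (q := q) hc hx
  set δ := ‖x‖ * (1 - ‖x‖) with hδ
  have hδ0 : 0 < δ := by positivity
  have hδ1 : δ ≤ 1 := by nlinarith
  have he1 : 1 ≤ δ⁻¹ := (one_le_inv₀ hδ0).2 hδ1
  have hsd : 1 ≤ Real.sqrt d := by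
    rw [Real.one_le_sqrt]; exact_mod_cast hd
  have hball : (2 * Real.sqrt d * (K * δ⁻¹))⁻¹ ≤ δ / 2 := by
    have : (2 * Real.sqrt d * (K * δ⁻¹))⁻¹ = (δ / 2) * (Real.sqrt d * K)⁻¹ := by
      field_simp
    rw [this]
    refine mul_le_of_le_one_right (by positivity) ?_
    exact inv_le_one_of_one_le₀ (one_le_mul_of_one_le_of_one_le hsd hK1)
  refine ⟨one_le_mul_of_one_le_of_one_le hK1 he1, hfx, ?_, ?_, ?_⟩
  · exact_mod_cast auxf_smooth (lfl β) hx
  · intro t h1 ht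
    have ht0 : (0 : ℝ) < t := by exact_mod_cast h1
    rw [Real.rpow_inv_le_iff_of_pos (by positivity) (by positivity) ht0, Real.rpow_natCast,
      div_le_iff₀ hfx]
    have hb := hA t x hx x (by simp; positivity)
    refine hb.trans ?_
    have h3 : A t ≤ K ^ t := (hKt t ht).trans (le_self_pow₀ hK1 (by omega))
    calc A t * auxf d c p q x * δ⁻¹ ^ t ≤ K ^ t * auxf d c p q x * δ⁻¹ ^ t := by gcongr
      _ = _ := by rw [mul_pow]; ring
  · intro y hy z hz hyz
    set R := (2 * Real.sqrt d * (K * δ⁻¹))⁻¹ with hR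
    have hzy : 0 < ‖z - y‖ := norm_pos_iff.2 (sub_ne_zero.2 hyz.symm)
    have hzyδ : ‖z - y‖ ≤ δ := by
      have h1 := Metric.mem_closedBall.1 hy
      have h2 := Metric.mem_closedBall.1 hz
      rw [← dist_eq_norm]
      have := dist_triangle_right z y x
      linarith
    have hmv := Convex.norm_image_sub_le_of_norm_fderiv_le (𝕜 := ℝ)
      (f := iteratedFDeriv ℝ m (auxf d c p q)) (s := Metric.closedBall x R)
      (C := A (m + 1) * auxf d c p q x * δ⁻¹ ^ (m + 1)) (x := y) (y := z) ?_ ?_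
      (convex_closedBall _ _) hy hz
    · have hs0 : 0 ≤ 1 - (β - m) := by linarith
      have hden : 0 < auxf d c p q x * ‖z - y‖ ^ (β - (m : ℝ)) := by positivity
      rw [Real.rpow_inv_le_iff_of_pos (by positivity) (by positivity) hβ, div_le_iff₀ hden]
      refine hmv.trans ?_
      have e1 : ‖z - y‖ = ‖z - y‖ ^ (β - (m : ℝ)) * ‖z - y‖ ^ (1 - (β - (m : ℝ))) := by
        rw [← Real.rpow_add hzy]; simp
      have e2 : ‖z - y‖ ^ (1 - (β - (m : ℝ))) ≤ δ ^ (1 - (β - (m : ℝ))) := by gcongr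
      have e3 : δ⁻¹ ^ (m + 1) * δ ^ (1 - (β - (m : ℝ))) = δ⁻¹ ^ β := by
        rw [Real.inv_rpow hδ0.le, ← Real.rpow_neg hδ0.le, inv_pow, ← Real.rpow_natCast,
          ← Real.rpow_neg hδ0.le, ← Real.rpow_add hδ0]
        congr 1; push_cast; ring
      calc A (m + 1) * auxf d c p q x * δ⁻¹ ^ (m + 1) * ‖z - y‖
          = A (m + 1) * auxf d c p q x * δ⁻¹ ^ (m + 1) *
            (‖z - y‖ ^ (β - (m : ℝ)) * ‖z - y‖ ^ (1 - (β - (m : ℝ)))) := by rw [← e1]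
        _ ≤ K ^ β * auxf d c p q x * δ⁻¹ ^ (m + 1) *
            (‖z - y‖ ^ (β - (m : ℝ)) * δ ^ (1 - (β - (m : ℝ)))) := by
            have := hA0 (m + 1)
            gcongr
        _ = K ^ β * (δ⁻¹ ^ (m + 1) * δ ^ (1 - (β - (m : ℝ)))) *
            (auxf d c p q x * ‖z - y‖ ^ (β - (m : ℝ))) := by ring
        _ = _ := by rw [e3, Real.mul_rpow (by linarith) (by positivity)]
    · intro w hw
      have hw' : ‖w - x‖ ≤ δ / 2 := by
        rw [← dist_eq_norm]; exact (Metric.mem_closedBall.1 hw).trans hball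
      exact (auxf_smooth (m + 1) (aux_near hx hw').1).differentiableAt_iteratedFDeriv
        (by exact_mod_cast Nat.lt_succ_self m)
    · intro w hw
      have hw' : ‖w - x‖ ≤ δ / 2 := by
        rw [← dist_eq_norm]; exact (Metric.mem_closedBall.1 hw).trans hball
      rw [norm_fderiv_iteratedFDeriv]
      exact hA (m + 1) x hx w hw'

lemma aux_beta (u v : ℝ) (hu : 0 < u) (hv : 0 < v) :
    Integrable (ProbabilityTheory.betaPDFReal u v) ∧
      ∫ x, ProbabilityTheory.betaPDFReal u v x = 1 := by
  have hm : AEStronglyMeasurable (ProbabilityTheory.betaPDFReal u v) volume :=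
    (ProbabilityTheory.measurable_betaPDFReal u v).aestronglyMeasurable
  have h0 : ∀ x, 0 ≤ ProbabilityTheory.betaPDFReal u v x := by
    intro x
    unfold ProbabilityTheory.betaPDFReal
    split_ifs with h
    · have := ProbabilityTheory.beta_pos hu hv
      have h1 := h.1
      have h2 : 0 < 1 - x := by linarith [h.2]
      positivity
    · exact le_rfl
  have h1 : ∫⁻ x, ENNReal.ofReal (ProbabilityTheory.betaPDFReal u v x) = 1 :=
    ProbabilityTheory.lintegral_betaPDF_eq_one hu hv
  constructor
  · refine ⟨hm, ?_⟩
    rw [hasFiniteIntegral_iff_ofReal (Eventually.of_forall h0), h1]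
    exact ENNReal.one_lt_top
  · rw [integral_eq_lintegral_of_nonneg_ae (Eventually.of_forall h0) hm, h1]
    simp

lemma aux_vol (d : ℕ) (hd : 0 < d) :
    (volume : Measure (Euc d)).real (Metric.ball 0 1) = Vball d := by
  haveI : Nonempty (Fin d) := ⟨⟨0, hd⟩⟩
  rw [Measure.real, EuclideanSpace.volume_ball]
  have h : 0 < Real.Gamma ((d : ℝ) / 2 + 1) := Real.Gamma_pos_of_pos (by positivity)
  simp only [ENNReal.ofReal_one, one_pow, one_mul, Fintype.card_fin]
  rw [ENNReal.toReal_ofReal (by positivity), Vball, Real.sqrt_eq_rpow, ← Real.rpow_natCast,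
    ← Real.rpow_mul Real.pi_pos.le, add_comm]
  congr 2; ring

lemma aux_polar (d : ℕ) (hd : 0 < d) (c p q : ℝ) (hp : 0 < p + d) (hq : 0 < q + 1) :
    Integrable (auxf d c p q) ∧
      ∫ x, auxf d c p q x = d * Vball d * (c * ProbabilityTheory.beta (p + d) (q + 1)) := by
  haveI : Nonempty (Fin d) := ⟨⟨0, hd⟩⟩
  obtain ⟨hI, hI1⟩ := aux_beta (p + d) (q + 1) hp hq
  have hb := ProbabilityTheory.beta_pos hp hq
  set φ : ℝ → ℝ := fun r => if r ≤ 1 then c * r ^ p * (1 - r) ^ q else 0 with hφ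
  have hfin : Module.finrank ℝ (Euc d) = d := by simp
  have hae : (fun r : ℝ => r ^ (Module.finrank ℝ (Euc d) - 1) • φ r) =ᵐ[volume.restrict (Ioi 0)]
      fun r => (c * ProbabilityTheory.beta (p + d) (q + 1)) *
        ProbabilityTheory.betaPDFReal (p + d) (q + 1) r := by
    have h1 : ∀ᵐ r : ℝ ∂(volume.restrict (Ioi 0)), r ≠ 1 := by
      refine ae_restrict_of_ae ?_
      simp [ae_iff]
    filter_upwards [h1, ae_restrict_mem measurableSet_Ioi] with r hr1 hr0
    have hr0 : 0 < r := hr0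
    simp only [hφ, ProbabilityTheory.betaPDFReal, hfin, smul_eq_mul]
    by_cases h : r < 1
    · rw [if_pos h.le, if_pos ⟨hr0, h⟩]
      have : r ^ (p + d - 1) = r ^ (d - 1) * r ^ p := by
        rw [← Real.rpow_natCast, ← Real.rpow_add hr0]
        congr 1
        rw [Nat.cast_sub hd]; push_cast; ring
      rw [this, add_sub_cancel_right]
      field_simp
    · have h' : ¬ r ≤ 1 := fun h2 => h (lt_of_le_of_ne h2 hr1)
      rw [if_neg h', if_neg (fun h2 => h h2.2)]
      simp
  constructor
  · change Integrable (fun x : Euc d => φ ‖x‖) volume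
    rw [integrable_fun_norm_addHaar volume]
    exact ((hI.const_mul _).integrableOn).congr hae.symm
  · change ∫ x : Euc d, φ ‖x‖ = _
    rw [integral_fun_norm_addHaar volume φ, integral_congr_ae hae, hfin, aux_vol d hd, integral_const_mul]
    have : ∫ r in Ioi (0 : ℝ), ProbabilityTheory.betaPDFReal (p + d) (q + 1) r = 1 := by
      refine Eq.trans ?_ hI1
      refine setIntegral_eq_integral_of_forall_compl_eq_zero (μ := (volume : Measure ℝ))
        (f := ProbabilityTheory.betaPDFReal (p + d) (q + 1)) fun r hr => ?_
      unfold ProbabilityTheory.betaPDFReal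
      rw [if_neg]
      rintro ⟨h, -⟩
      exact hr h
    rw [this]
    simp
    ring

lemma auxf_nonneg {d : ℕ} {c p q : ℝ} (hc : 0 < c) (x : Euc d) : 0 ≤ auxf d c p q x := by
  unfold auxf
  split_ifs with h
  · have : 0 ≤ 1 - ‖x‖ := by linarith
    positivity
  · exact le_rfl

lemma auxf_meas (d : ℕ) (c p q : ℝ) : Measurable (auxf d c p q) := by
  unfold auxf
  refine Measurable.ite (measurableSet_le measurable_norm measurable_const) ?_ measurable_const
  fun_prop

lemma auxf_le {d : ℕ} {c p q : ℝ} (hc : 0 < c) (hp : 0 ≤ p) (hq : 0 ≤ q) (x : Euc d) :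
    auxf d c p q x ≤ c := by
  unfold auxf
  split_ifs with h
  · have h1 : 0 ≤ 1 - ‖x‖ := by linarith
    have h2 : ‖x‖ ^ p ≤ 1 := Real.rpow_le_one (norm_nonneg _) h hp
    have h3 : (1 - ‖x‖) ^ q ≤ 1 := Real.rpow_le_one h1 (by linarith [norm_nonneg x]) hq
    have h4 : 0 ≤ (1 - ‖x‖) ^ q := by positivity
    have h5 : 0 ≤ ‖x‖ ^ p := by positivity
    rw [mul_assoc]
    exact mul_le_of_le_one_right hc.le (mul_le_one₀ h2 h4 h3)
  · exact hc.le

lemma aux_ae (d : ℕ) (hd : 0 < d) : ∀ᵐ x : Euc d, ‖x‖ ≤ 1 → x ∈ auxU d := by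
  haveI : Nonempty (Fin d) := ⟨⟨0, hd⟩⟩
  have h1 : ∀ᵐ x : Euc d, x ∉ Metric.sphere (0 : Euc d) 1 :=
    measure_eq_zero_iff_ae_notMem.1 (Measure.addHaar_sphere volume 0 1)
  have h0 : ∀ᵐ x : Euc d, x ∉ Metric.sphere (0 : Euc d) 0 :=
    measure_eq_zero_iff_ae_notMem.1 (Measure.addHaar_sphere volume 0 0)
  filter_upwards [h0, h1] with x hx0 hx1 hx
  simp only [mem_sphere_iff_norm, sub_zero] at hx0 hx1
  exact ⟨lt_of_le_of_ne (norm_nonneg _) (Ne.symm hx0), lt_of_le_of_ne hx hx1⟩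

lemma aux_final (d : ℕ) (hd : 0 < d) (c p q β lam : ℝ) (hc : 0 < c) (hp : 0 ≤ p) (hq : 0 ≤ q)
    (hβ : 0 < β) (hlam : 0 < lam) (h1 : 0 < p * (1 - lam) - d * lam + d)
    (h2 : 0 < q * (1 - lam) - d * lam + 1) :
    (∫⁻ x in {x | 0 < auxf d c p q x},
        ENNReal.ofReal (auxf d c p q x) *
          (Mloc β (auxf d c p q) x ^ (d : ℝ) / ENNReal.ofReal (auxf d c p q x)) ^ lam) < ⊤ := by
  obtain ⟨K, hK1, hK⟩ := aux_MSet d hd c p q β hc hp hq hβ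
  set c' := c ^ (1 - lam) * K ^ (d * lam) with hc'
  have hI := (aux_polar d hd c' (p * (1 - lam) - d * lam) (q * (1 - lam) - d * lam) h1 h2).1
  refine lt_of_le_of_lt ?_ hI.lintegral_lt_top
  refine le_trans (setLIntegral_mono_ae' (g := fun x => ENNReal.ofReal
      (auxf d c' (p * (1 - lam) - d * lam) (q * (1 - lam) - d * lam) x)) ?_ ?_)
    (setLIntegral_le_lintegral _ _)
  · exact measurableSet_lt measurable_const (auxf_meas d c p q)
  · filter_upwards [aux_ae d hd] with x hx hpos
    have hle : ‖x‖ ≤ 1 := by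
      by_contra h
      simp [auxf, h] at hpos
    have hxU := hx hle
    have hpos : 0 < auxf d c p q x := hpos
    have hM : Mloc β (auxf d c p q) x ≤ ENNReal.ofReal (K * (‖x‖ * (1 - ‖x‖))⁻¹) :=
      sInf_le ⟨_, hK x hxU, rfl⟩
    have hx0 := hxU.1
    have hx1 : 0 < 1 - ‖x‖ := sub_pos.2 hxU.2
    have hM0 : 0 < K * (‖x‖ * (1 - ‖x‖))⁻¹ := by positivity
    calc _ ≤ ENNReal.ofReal (auxf d c p q x) *
          (ENNReal.ofReal (K * (‖x‖ * (1 - ‖x‖))⁻¹) ^ (d : ℝ) /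
            ENNReal.ofReal (auxf d c p q x)) ^ lam := by gcongr
      _ = ENNReal.ofReal (auxf d c p q x *
          ((K * (‖x‖ * (1 - ‖x‖))⁻¹) ^ (d : ℝ) / auxf d c p q x) ^ lam) := by
          rw [ENNReal.ofReal_rpow_of_nonneg hM0.le (by positivity),
            ← ENNReal.ofReal_div_of_pos hpos,
            ENNReal.ofReal_rpow_of_nonneg (by positivity) hlam.le, ← ENNReal.ofReal_mul hpos.le]
      _ = _ := by
          congr 1
          rw [auxf_eq hxU, auxf_eq hxU, hc']
          have hK0 : 0 < K := by linarith
          generalize 1 - ‖x‖ = s at *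
          generalize ‖x‖ = r at *
          rw [← Real.exp_log hc, ← Real.exp_log hK0, ← Real.exp_log hx0, ← Real.exp_log hx1]
          simp only [← Real.exp_mul, ← Real.exp_add, ← Real.exp_neg, ← Real.exp_sub]
          congr 1
          ring

/-- Proposition: the radially symmetric Beta-type density belongs to the classes
`𝒢_{d,(α,β,λ,C)}` for all sufficiently large `C`. -/
theorem beta_density_mem_Gclass
    (d : ℕ) (hd : 0 < d) (a b : ℝ) (ha : 1 ≤ a) (hb : 1 ≤ b)
    (α β lam : ℝ) (hα : 0 < α) (hβ : 0 < β)
    (hlam : 0 < lam) (hlam' : lam < b / (b + d - 1)) :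
    ∃ C0 > (0 : ℝ), ∀ C : ℝ, C0 ≤ C →
      (fun x : Euc d =>
          if ‖x‖ ≤ 1 then
            Real.Gamma (a + b + d - 1) /
                (d * Vball d * Real.Gamma (a + d - 1) * Real.Gamma b) *
              ‖x‖ ^ (a - 1) * (1 - ‖x‖) ^ (b - 1)
          else 0) ∈ Gclass d α β lam C := by
  have hd1 : (1 : ℝ) ≤ d := by exact_mod_cast hd
  have hG1 : 0 < Real.Gamma (a + b + d - 1) := Real.Gamma_pos_of_pos (by linarith)
  have hG2 : 0 < Real.Gamma (a + d - 1) := Real.Gamma_pos_of_pos (by linarith)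
  have hG3 : 0 < Real.Gamma b := Real.Gamma_pos_of_pos (by linarith)
  have hV : 0 < Vball d := by
    have : 0 < Real.Gamma (1 + (d : ℝ) / 2) := Real.Gamma_pos_of_pos (by positivity)
    unfold Vball
    have := Real.pi_pos
    positivity
  set c : ℝ := Real.Gamma (a + b + d - 1) /
                (d * Vball d * Real.Gamma (a + d - 1) * Real.Gamma b) with hcdef
  have hc : 0 < c := by positivity
  change ∃ C0 > (0 : ℝ), ∀ C : ℝ, C0 ≤ C → auxf d c (a - 1) (b - 1) ∈ Gclass d α β lam C
  have hbd : 0 < b + d - 1 := by linarith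
  have hl : lam * (b + d - 1) < b := (lt_div_iff₀ hbd).1 hlam'
  have hl1 : lam < 1 := by nlinarith
  have hfin := aux_final d hd c (a - 1) (b - 1) β lam hc (by linarith) (by linarith) hβ hlam
    (by nlinarith [mul_pos (sub_pos.2 hl1) (by linarith : 0 < a - 1 + d)]) (by nlinarith)
  obtain ⟨hI, hI1⟩ := aux_polar d hd c (a - 1) (b - 1) (by linarith) (by linarith)
  have hone : ∫ x, auxf d c (a - 1) (b - 1) x = 1 := by
    rw [hI1, ProbabilityTheory.beta, hcdef, show a - 1 + d = a + d - 1 by ring,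
      show a + d - 1 + (b - 1 + 1) = a + b + d - 1 by ring, sub_add_cancel]
    field_simp
  set J := ∫⁻ x in {x | 0 < auxf d c (a - 1) (b - 1) x},
        ENNReal.ofReal (auxf d c (a - 1) (b - 1) x) *
          (Mloc β (auxf d c (a - 1) (b - 1)) x ^ (d : ℝ) /
            ENNReal.ofReal (auxf d c (a - 1) (b - 1) x)) ^ lam with hJ
  refine ⟨1 + c + J.toReal, by positivity, fun C hC => ?_⟩
  have hJ0 : 0 ≤ J.toReal := ENNReal.toReal_nonneg
  refine ⟨⟨auxf_meas _ _ _ _, auxf_nonneg hc, hone⟩, ?_, ?_, ?_⟩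
  · calc _ ≤ ∫⁻ x, ENNReal.ofReal (auxf d c (a - 1) (b - 1) x) := by
          refine lintegral_mono fun x => ENNReal.ofReal_le_ofReal ?_
          by_cases h : ‖x‖ ≤ 1
          · exact mul_le_of_le_one_left (auxf_nonneg hc x)
              (Real.rpow_le_one (norm_nonneg _) h hα.le)
          · simp [auxf, h]
      _ = ENNReal.ofReal 1 := by
          rw [← ofReal_integral_eq_lintegral_ofReal hI (Eventually.of_forall (auxf_nonneg hc)), hone]
      _ ≤ _ := ENNReal.ofReal_le_ofReal (by linarith)
  · intro x
    exact (auxf_le hc (by linarith) (by linarith) x).trans (by linarith)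
  · change J ≤ _
    rw [← ENNReal.ofReal_toReal hfin.ne]
    exact ENNReal.ofReal_le_ofReal (by linarith)

end
end

section
/- Suppose b > a > 0 and let B ~ Beta(a, b−a). Writing h(t) := t − log(1+t), we have, for all u ∈ [0,∞): P(|B − a/b| ≥ a^{1/2} u / b) ≤ 2 exp( −a h( a^{−1/2} b^{1/2} u / (b^{1/2} + a^{1/2} + u) ) ) + 2 exp( −b h( u / (b^{1/2} + a^{1/2} + u) ) ). -/
open MeasureTheory Filter Set
open scoped ENNReal NNReal BigOperators Topology

noncomputable section

/-- `h(t) = t - log(1+t)`. -/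
def hexp (t : ℝ) : ℝ := t - Real.log (1 + t)

lemma beta_change (a c θ : ℝ) (hθ : θ < 1) (hI : IntegrableOn
      (fun s : ℝ => s ^ (a - 1) * (1 - s) ^ (c - 1)) (Set.Ioo 0 1)) :
    IntegrableOn (fun s : ℝ => (1 - θ) ^ a * (1 - θ * s) ^ (-(a + c)) *
        (s ^ (a - 1) * (1 - s) ^ (c - 1))) (Set.Ioo 0 1) ∧
    ∫ s in Set.Ioo (0 : ℝ) 1, (1 - θ) ^ a * (1 - θ * s) ^ (-(a + c)) *
        (s ^ (a - 1) * (1 - s) ^ (c - 1)) =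
      ∫ s in Set.Ioo (0 : ℝ) 1, s ^ (a - 1) * (1 - s) ^ (c - 1) := by
  have h1 : 0 < 1 - θ := by linarith
  have hpos : ∀ s ∈ Set.Ioo (0 : ℝ) 1, 0 < 1 - θ * s := by
    rintro s ⟨h0, h2⟩; nlinarith
  let f : ℝ → ℝ := fun s => (1 - θ) * s / (1 - θ * s)
  let f' : ℝ → ℝ := fun s => (1 - θ) / (1 - θ * s) ^ 2
  have hder : ∀ s ∈ Set.Ioo (0 : ℝ) 1, HasDerivWithinAt f (f' s) (Set.Ioo 0 1) s := by
    intro s hs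
    have hp := hpos s hs
    have := (((hasDerivAt_id s).const_mul (1 - θ)).div
      (((hasDerivAt_id s).const_mul θ).const_sub 1) hp.ne').hasDerivWithinAt (s := Set.Ioo 0 1)
    refine this.congr_deriv ?_
    change _ = (1 - θ) / (1 - θ * s) ^ 2
    simp only [id]
    congr 1
    ring
  have hinj : Set.InjOn f (Set.Ioo 0 1) := by
    intro s hs t ht hst
    have hp := hpos s hs
    have hq := hpos t ht
    simp only [f] at hst
    rw [div_eq_div_iff hp.ne' hq.ne'] at hst
    have : (1 - θ) * (s - t) = 0 := by linarith
    rcases mul_eq_zero.1 this with h | h <;> linarith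
  have h1f : ∀ s ∈ Set.Ioo (0 : ℝ) 1, 1 - f s = (1 - s) / (1 - θ * s) := by
    intro s hs
    have hp := hpos s hs
    simp only [f]
    field_simp
    ring
  have himg : f '' Set.Ioo 0 1 = Set.Ioo 0 1 := by
    ext y
    constructor
    · rintro ⟨s, hs, rfl⟩
      have hp := hpos s hs
      have h2 : 0 < (1 - s) / (1 - θ * s) := div_pos (by linarith [hs.2]) hp
      rw [← h1f s hs] at h2
      exact ⟨div_pos (mul_pos h1 hs.1) hp, by linarith⟩
    · rintro ⟨h0, h2⟩
      have hd : 0 < 1 - θ + θ * y := by nlinarith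
      refine ⟨y / (1 - θ + θ * y), ⟨div_pos h0 hd, ?_⟩, ?_⟩
      · rw [div_lt_one hd]; nlinarith
      · simp only [f]
        have : 1 - θ * (y / (1 - θ + θ * y)) = (1 - θ) / (1 - θ + θ * y) := by
          field_simp; ring
        rw [this]
        field_simp
  have key : ∀ s ∈ Set.Ioo (0 : ℝ) 1,
      |f' s| • ((f s) ^ (a - 1) * (1 - f s) ^ (c - 1)) =
      (1 - θ) ^ a * (1 - θ * s) ^ (-(a + c)) * (s ^ (a - 1) * (1 - s) ^ (c - 1)) := by
    intro s hs
    have hp := hpos s hs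
    rw [h1f s hs, abs_of_pos (div_pos h1 (pow_pos hp 2)), smul_eq_mul]
    simp only [f, f']
    rw [Real.div_rpow (mul_pos h1 hs.1).le hp.le, Real.div_rpow (by linarith [hs.2]) hp.le,
      Real.mul_rpow h1.le hs.1.le]
    have e1 : (1 - θ) ^ a = (1 - θ) ^ (a - 1) * (1 - θ) := by
      nth_rewrite 3 [← Real.rpow_one (1 - θ)]
      rw [← Real.rpow_add h1]; congr 1; ring
    have e2 : (1 - θ * s) ^ (-(a + c)) =
        ((1 - θ * s) ^ (a - 1) * (1 - θ * s) ^ (c - 1) * (1 - θ * s) ^ 2)⁻¹ := by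
      rw [Real.rpow_neg hp.le, ← Real.rpow_natCast (1 - θ * s) 2, ← Real.rpow_add hp,
        ← Real.rpow_add hp]
      congr 2; push_cast; ring
    rw [e1, e2]
    have := (Real.rpow_pos_of_pos hp (a - 1)).ne'
    have := (Real.rpow_pos_of_pos hp (c - 1)).ne'
    field_simp
  constructor
  · have := (integrableOn_image_iff_integrableOn_abs_deriv_smul measurableSet_Ioo hder hinj
      (fun s : ℝ => s ^ (a - 1) * (1 - s) ^ (c - 1))).1 (by rw [himg]; exact hI)
    exact this.congr_fun key measurableSet_Ioo
  · have := integral_image_eq_integral_abs_deriv_smul measurableSet_Ioo hder hinj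
      (fun s : ℝ => s ^ (a - 1) * (1 - s) ^ (c - 1))
    rw [himg] at this
    rw [this]
    exact (setIntegral_congr_fun measurableSet_Ioo key).symm

lemma beta_chernoff (a c θ t : ℝ) (hb : 0 < a + c) (hθ : θ < 1) (hI : IntegrableOn
      (fun s : ℝ => s ^ (a - 1) * (1 - s) ^ (c - 1)) (Set.Ioo 0 1))
    (E : Set ℝ) (hE : MeasurableSet E) (hE1 : E ⊆ Set.Ioo 0 1) (hE2 : ∀ s ∈ E, θ * t ≤ θ * s) :
    ∫ s in E, s ^ (a - 1) * (1 - s) ^ (c - 1) ≤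
      Real.exp (-((a + c) * (θ * t)) - a * Real.log (1 - θ)) *
      ∫ s in Set.Ioo (0 : ℝ) 1, s ^ (a - 1) * (1 - s) ^ (c - 1) := by
  obtain ⟨hJ, hJe⟩ := beta_change a c θ hθ hI
  have h1 : 0 < 1 - θ := by linarith
  have hnn : ∀ s ∈ Set.Ioo (0 : ℝ) 1, 0 ≤ s ^ (a - 1) * (1 - s) ^ (c - 1) := fun s hs =>
    mul_nonneg (Real.rpow_nonneg hs.1.le _) (Real.rpow_nonneg (by linarith [hs.2]) _)
  have hpos : ∀ s ∈ Set.Ioo (0 : ℝ) 1, 0 < 1 - θ * s := by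
    rintro s ⟨h0, h2⟩; nlinarith
  rw [← hJe, ← integral_const_mul]
  refine le_trans (setIntegral_mono_on (hI.mono_set hE1)
    (Integrable.const_mul (hJ.mono_set hE1) _) hE ?_)
    (setIntegral_mono_set (Integrable.const_mul hJ _) ?_ hE1.eventuallyLE)
  · intro s hs
    have hp := hpos s (hE1 hs)
    rw [← mul_assoc]
    refine le_mul_of_one_le_left (hnn s (hE1 hs)) ?_
    rw [Real.rpow_def_of_pos h1, Real.rpow_def_of_pos hp, ← Real.exp_add, ← Real.exp_add,
      Real.one_le_exp_iff]
    have := Real.log_le_sub_one_of_pos hp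
    have h2 := hE2 s hs
    have : 0 ≤ (a + c) * (-(θ * t) - Real.log (1 - θ * s)) :=
      mul_nonneg hb.le (by linarith)
    nlinarith
  · refine (ae_restrict_iff' measurableSet_Ioo).2 (Filter.Eventually.of_forall fun s hs => ?_)
    have hp := hpos s hs
    have := hnn s hs
    have := Real.rpow_pos_of_pos hp (-(a + c))
    have := Real.rpow_pos_of_pos h1 a
    simp only [Pi.zero_apply]
    positivity

/-- Lemma: a two-sided tail bound for the `Beta(a, b-a)` distribution, expressed via
the integral of the Beta density. -/
theorem beta_tail_bound
    (a b : ℝ) (ha : 0 < a) (hab : a < b) (u : ℝ) (hu : 0 ≤ u) :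
    (∫ s in {s : ℝ | s ∈ Set.Ioo (0 : ℝ) 1 ∧ Real.sqrt a * u / b ≤ |s - a / b|},
        s ^ (a - 1) * (1 - s) ^ (b - a - 1)) /
      (∫ s in Set.Ioo (0 : ℝ) 1, s ^ (a - 1) * (1 - s) ^ (b - a - 1)) ≤
    2 * Real.exp (-(a * hexp
        (Real.sqrt b * u / (Real.sqrt a * (Real.sqrt b + Real.sqrt a + u))))) +
      2 * Real.exp (-(b * hexp (u / (Real.sqrt b + Real.sqrt a + u)))) := by
  have hb : 0 < b := ha.trans hab
  set I := ∫ s in Set.Ioo (0 : ℝ) 1, s ^ (a - 1) * (1 - s) ^ (b - a - 1) with hIdef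
  by_cases hI0 : I = 0
  · rw [hI0, div_zero]; positivity
  have hI : IntegrableOn (fun s : ℝ => s ^ (a - 1) * (1 - s) ^ (b - a - 1)) (Set.Ioo 0 1) := by
    by_contra h
    exact hI0 (integral_undef h)
  have hIpos : 0 < I := lt_of_le_of_ne (setIntegral_nonneg measurableSet_Ioo fun s hs =>
    mul_nonneg (Real.rpow_nonneg hs.1.le _) (Real.rpow_nonneg (by linarith [hs.2]) _)) (Ne.symm hI0)
  have hsa : 0 < Real.sqrt a := Real.sqrt_pos.2 ha
  have hsb : 0 < Real.sqrt b := Real.sqrt_pos.2 hb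
  have hsaa : Real.sqrt a * Real.sqrt a = a := Real.mul_self_sqrt ha.le
  obtain ⟨w, hw⟩ : ∃ w, w = u / Real.sqrt a := ⟨_, rfl⟩
  have hwa : Real.sqrt a * u = a * w := by
    rw [hw]; nth_rewrite 2 [← hsaa]; field_simp
  obtain ⟨x, hx⟩ : ∃ x, x = Real.sqrt b * u / (Real.sqrt a * (Real.sqrt b + Real.sqrt a + u)) :=
    ⟨_, rfl⟩
  have hx0 : 0 ≤ x := by rw [hx]; positivity
  have hxw : x ≤ w := by
    rw [hx, hw, div_le_div_iff₀ (by positivity) hsa]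
    have : 0 ≤ u * Real.sqrt a * (Real.sqrt a + u) := by positivity
    nlinarith
  rw [← hx, hwa]
  set F : ℝ → ℝ := fun s => s ^ (a - 1) * (1 - s) ^ (b - a - 1) with hF
  have hbb : a + (b - a) = b := by ring
  have mU : MeasurableSet (Set.Ioo (0 : ℝ) 1 ∩ Set.Ici (a / b * (1 + w))) :=
    measurableSet_Ioo.inter measurableSet_Ici
  have mL : MeasurableSet (Set.Ioo (0 : ℝ) 1 ∩ Set.Iic (a / b * (1 - w))) :=
    measurableSet_Ioo.inter measurableSet_Iic
  have hU := beta_chernoff a (b - a) (x / (1 + x)) (a / b * (1 + w)) (by linarith)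
    (by rw [div_lt_one (by linarith)]; linarith) hI _ mU Set.inter_subset_left
    (fun s hs => mul_le_mul_of_nonneg_left hs.2 (by positivity))
  have hL := beta_chernoff a (b - a) (-x) (a / b * (1 - w)) (by linarith)
    (by linarith) hI _ mL Set.inter_subset_left
    (fun s hs => by have h2 : s ≤ a / b * (1 - w) := hs.2
                    nlinarith [mul_le_mul_of_nonneg_left h2 hx0])
  rw [hbb] at hU hL
  have eU : Real.exp (-(b * (x / (1 + x) * (a / b * (1 + w)))) - a * Real.log (1 - x / (1 + x)))
      ≤ Real.exp (-(a * hexp x)) := by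
    rw [Real.exp_le_exp]
    have h1 : 1 - x / (1 + x) = (1 + x)⁻¹ := by field_simp; ring
    have h2 : b * (x / (1 + x) * (a / b * (1 + w))) = a * (x * (1 + w) / (1 + x)) := by field_simp
    have h3 : x ≤ x * (1 + w) / (1 + x) := by
      rw [le_div_iff₀ (by linarith)]; nlinarith
    rw [h1, h2, Real.log_inv, hexp]
    nlinarith
  have eL : Real.exp (-(b * (-x * (a / b * (1 - w)))) - a * Real.log (1 - -x))
      ≤ Real.exp (-(a * hexp x)) := by
    rw [Real.exp_le_exp]
    have h2 : b * (-x * (a / b * (1 - w))) = a * (-x * (1 - w)) := by field_simp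
    have h3 := Real.le_log_one_add_of_nonneg hx0
    have h4 : x - x ^ 2 / 2 ≤ 2 * x / (x + 2) := by
      rw [le_div_iff₀ (by linarith)]
      nlinarith [pow_nonneg hx0 3]
    have h5 : 0 ≤ a * (2 * Real.log (1 + x) - (2 * x - x * w)) :=
      mul_nonneg ha.le (by nlinarith)
    rw [h2, sub_neg_eq_add, hexp]
    nlinarith
  have hsub : {s : ℝ | s ∈ Set.Ioo (0 : ℝ) 1 ∧ a * w / b ≤ |s - a / b|} ⊆
      (Set.Ioo (0 : ℝ) 1 ∩ Set.Ici (a / b * (1 + w))) ∪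
      (Set.Ioo (0 : ℝ) 1 ∩ Set.Iic (a / b * (1 - w))) := by
    rintro s ⟨hs, h⟩
    have e : a * w / b = a / b * w := by ring
    rw [e] at h
    rcases le_abs.1 h with h | h
    · exact Or.inl ⟨hs, by simp only [Set.mem_Ici]; linarith⟩
    · exact Or.inr ⟨hs, by simp only [Set.mem_Iic]; linarith⟩
  have hFU := hI.mono_set (Set.inter_subset_left (s := Set.Ioo 0 1) (t := Set.Ici (a / b * (1 + w))))
  have hFL := hI.mono_set (Set.inter_subset_left (s := Set.Ioo 0 1) (t := Set.Iic (a / b * (1 - w))))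
  have hnn : ∀ s ∈ Set.Ioo (0 : ℝ) 1, 0 ≤ F s := fun s hs =>
    mul_nonneg (Real.rpow_nonneg hs.1.le _) (Real.rpow_nonneg (by linarith [hs.2]) _)
  have hnnI : ∀ A B : Set ℝ, MeasurableSet B → B ⊆ Set.Ioo 0 1 →
      0 ≤ᵐ[volume.restrict B] F := fun _ B hB hB1 =>
    (ae_restrict_iff' hB).2 (Filter.Eventually.of_forall fun s hs => hnn s (hB1 hs))
  have step1 := setIntegral_mono_set (hFU.union hFL) (hnnI ∅ _ (mU.union mL)
    (Set.union_subset Set.inter_subset_left Set.inter_subset_left)) hsub.eventuallyLE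
  have step2 : ∫ s in (Set.Ioo (0 : ℝ) 1 ∩ Set.Ici (a / b * (1 + w))) ∪
      (Set.Ioo (0 : ℝ) 1 ∩ Set.Iic (a / b * (1 - w))), F s ≤
      (∫ s in Set.Ioo (0 : ℝ) 1 ∩ Set.Ici (a / b * (1 + w)), F s) +
      ∫ s in Set.Ioo (0 : ℝ) 1 ∩ Set.Iic (a / b * (1 - w)), F s := by
    rw [← Set.union_sdiff_self, setIntegral_union Set.disjoint_sdiff_right (mL.diff mU) hFU
      (hFL.mono_set Set.sdiff_subset)]
    refine add_le_add le_rfl ?_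
    exact setIntegral_mono_set hFL (hnnI ∅ _ mL Set.inter_subset_left)
      Set.sdiff_subset.eventuallyLE
  have hU' := hU.trans (mul_le_mul_of_nonneg_right eU hIpos.le)
  have hL' := hL.trans (mul_le_mul_of_nonneg_right eL hIpos.le)
  rw [div_le_iff₀ hIpos]
  have hlast : 0 ≤ 2 * Real.exp (-(b * hexp (u / (Real.sqrt b + Real.sqrt a + u)))) * I := by
    positivity
  have := step1.trans step2
  simp only [hF] at this hU' hL' ⊢
  linarith

end
end

section
/- Fix d ∈ ℕ and ϑ = (α,β,λ₁,λ₂,γ,C) ∈ (0,∞)^6, and suppose a, b, c ∈ [0,∞) satisfy a/λ₁ + b/λ₂ + c/α < 1. Then sup_{(f,g)∈ℱ_{d,ϑ}} ∫_𝒳 f(x) {M_β(x)^d/f(x)}^a {M_β(x)^d/g(x)}^b (1+‖x‖)^c dx < ∞. Moreover, whenever a ∈ (d/(α+d), 1], sup over densities f on ℝ^d with μ_α(f) ≤ C of ∫_{{f>0}} f(x)^a dx < ∞. -/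
open MeasureTheory Filter Set
open scoped ENNReal NNReal BigOperators Topology

noncomputable section

lemma aux_one_add_rpow {α r : ℝ} (hα : 0 < α) (hr : 0 ≤ r) :
    (1 + r) ^ α ≤ 2 ^ α * (1 + r ^ α) := by
  have hm : 1 + r ≤ 2 * max 1 r := by
    have := le_max_left 1 r
    have := le_max_right 1 r
    linarith
  have h1 : (1 + r) ^ α ≤ 2 ^ α * (max 1 r) ^ α := by
    rw [← Real.mul_rpow (by norm_num) (by positivity)]
    exact Real.rpow_le_rpow (by positivity) hm hα.le
  refine h1.trans ?_
  have h0 : 0 ≤ r ^ α := Real.rpow_nonneg hr α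
  gcongr
  rcases le_total 1 r with h | h
  · rw [max_eq_right h]; linarith
  · rw [max_eq_left h, Real.one_rpow]; linarith

lemma aux_moment {d : ℕ} {α C : ℝ} (hα : 0 < α) (hC : 0 < C) {f : Euc d → ℝ}
    (hf : IsDensity f)
    (hm : (∫⁻ x, ENNReal.ofReal (‖x‖ ^ α * f x)) ≤ ENNReal.ofReal C) :
    (∫⁻ x, ENNReal.ofReal (f x * (1 + ‖x‖) ^ α)) ≤ ENNReal.ofReal (2 ^ α * (1 + C)) := by
  obtain ⟨hmeas, hnn, hint⟩ := hf
  have hI : Integrable f := by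
    by_contra h
    rw [integral_undef h] at hint
    norm_num at hint
  have hone : (∫⁻ x, ENNReal.ofReal (f x)) = 1 := by
    rw [← ofReal_integral_eq_lintegral_ofReal hI (Eventually.of_forall hnn), hint]
    simp
  calc (∫⁻ x, ENNReal.ofReal (f x * (1 + ‖x‖) ^ α))
      ≤ ∫⁻ x, ENNReal.ofReal (2 ^ α) *
          (ENNReal.ofReal (f x) + ENNReal.ofReal (‖x‖ ^ α * f x)) := by
        refine lintegral_mono fun x => ?_
        have hp : 0 ≤ ‖x‖ ^ α := Real.rpow_nonneg (norm_nonneg x) α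
        rw [← ENNReal.ofReal_add (hnn x) (mul_nonneg hp (hnn x)),
          ← ENNReal.ofReal_mul (by positivity)]
        apply ENNReal.ofReal_le_ofReal
        have := mul_le_mul_of_nonneg_left (aux_one_add_rpow hα (norm_nonneg x)) (hnn x)
        linarith
    _ = ENNReal.ofReal (2 ^ α) * (1 + ∫⁻ x, ENNReal.ofReal (‖x‖ ^ α * f x)) := by
        rw [lintegral_const_mul _ (by fun_prop), lintegral_add_left (by fun_prop), hone]
    _ ≤ ENNReal.ofReal (2 ^ α) * (1 + ENNReal.ofReal C) := by gcongr
    _ = ENNReal.ofReal (2 ^ α * (1 + C)) := by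
        rw [ENNReal.ofReal_mul (by positivity), ENNReal.ofReal_add (by norm_num) hC.le]
        simp

lemma aux_pointwise {p q s a b c : ℝ} (hp : 0 < p) (hq : 0 < q) (hs : 0 < s)
    (ha : 0 ≤ a) (hb : 0 ≤ b) (hc : 0 ≤ c) (h : a / p + b / q + c / s < 1)
    (A B W : ℝ≥0∞) (hW : 1 ≤ W) :
    A ^ a * B ^ b * W ^ c ≤ A ^ p + B ^ q + W ^ s := by
  set T := A ^ p + B ^ q + W ^ s with hT
  have hWs : 1 ≤ W ^ s := by
    simpa using ENNReal.rpow_le_rpow hW hs.le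
  have hT1 : 1 ≤ T := hWs.trans le_add_self
  have key : ∀ (X : ℝ≥0∞) (u v : ℝ), 0 < v → 0 ≤ u → X ^ v ≤ T → X ^ u ≤ T ^ (u / v) := by
    intro X u v hv hu hX
    have : X ^ u = (X ^ v) ^ (u / v) := by
      rw [← ENNReal.rpow_mul]; congr 1; field_simp
    rw [this]
    exact ENNReal.rpow_le_rpow hX (by positivity)
  have h1 := key A a p hp ha (by rw [hT, add_assoc]; exact le_self_add)
  have h2 := key B b q hq hb (by rw [hT, add_assoc]; exact le_add_left le_self_add)
  have h3 := key W c s hs hc le_add_self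
  calc A ^ a * B ^ b * W ^ c ≤ T ^ (a / p) * T ^ (b / q) * T ^ (c / s) := by gcongr
    _ = T ^ (a / p + b / q + c / s) := by
        rw [ENNReal.rpow_add_of_nonneg _ _ (by positivity) (by positivity),
          ENNReal.rpow_add_of_nonneg _ _ (by positivity) (by positivity)]
    _ ≤ T ^ (1 : ℝ) := ENNReal.rpow_le_rpow_of_exponent_le hT1 h.le
    _ = T := ENNReal.rpow_one T

lemma aux_young {α a y w : ℝ} (ha : 0 < a) (ha1 : a < 1) (hy : 0 ≤ y)
    (hw : 1 ≤ w) :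
    y ^ a ≤ y * w ^ α + w ^ (-(α * a / (1 - a))) := by
  have hw0 : 0 < w := by linarith
  have h1a : 0 < 1 - a := by linarith
  have hP : 0 ≤ y * w ^ α := by positivity
  have hQ : 0 ≤ w ^ (-(α * a / (1 - a))) := by positivity
  have := Real.geom_mean_le_arith_mean2_weighted ha.le h1a.le hP hQ (by ring)
  have e : (y * w ^ α) ^ a * (w ^ (-(α * a / (1 - a)))) ^ (1 - a) = y ^ a := by
    rw [Real.mul_rpow hy (by positivity), ← Real.rpow_mul hw0.le, ← Real.rpow_mul hw0.le,
      mul_assoc, ← Real.rpow_add hw0]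
    have : α * a + -(α * a / (1 - a)) * (1 - a) = 0 := by field_simp; ring
    rw [this, Real.rpow_zero, mul_one]
  rw [e] at this
  nlinarith

/-- Lemma (generalised Hölder bounds for the classes `ℱ_{d,ϑ}`). -/
theorem generalised_holder_bounds
    (d : ℕ) (hd : 0 < d)
    (α β lam1 lam2 γ C : ℝ)
    (hα : 0 < α) (hβ : 0 < β) (hlam1 : 0 < lam1) (hlam2 : 0 < lam2)
    (hγ : 0 < γ) (hC : 0 < C)
    (a b c : ℝ) (ha : 0 ≤ a) (hb : 0 ≤ b) (hcc : 0 ≤ c)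
    (habc : a / lam1 + b / lam2 + c / α < 1) :
    (∃ B : ℝ, ∀ f g : Euc d → ℝ, (f, g) ∈ Fclass d α β lam1 lam2 γ C →
      (∫⁻ x in suppXY f g,
          ENNReal.ofReal (f x) *
            (MlocPair β f g x ^ (d : ℝ) / ENNReal.ofReal (f x)) ^ a *
            (MlocPair β f g x ^ (d : ℝ) / ENNReal.ofReal (g x)) ^ b *
            ENNReal.ofReal ((1 + ‖x‖) ^ c)) ≤ ENNReal.ofReal B) ∧
    (∀ a' : ℝ, (d : ℝ) / (α + d) < a' → a' ≤ 1 →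
      ∃ B : ℝ, ∀ f : Euc d → ℝ, IsDensity f →
        (∫⁻ x, ENNReal.ofReal (‖x‖ ^ α * f x)) ≤ ENNReal.ofReal C →
        (∫⁻ x in {x | 0 < f x}, ENNReal.ofReal (f x ^ a')) ≤ ENNReal.ofReal B) := by
  refine ⟨⟨C + 2 ^ α * (1 + C), ?_⟩, ?_⟩
  · rintro f g ⟨⟨hf, hm, -, -⟩, -, -, -, -, hF⟩
    simp only at hf hm hF
    have hmeas : Measurable f := hf.1
    rw [ENNReal.ofReal_add hC.le (by positivity)]
    refine le_trans ?_ (add_le_add hF ((setLIntegral_le_lintegral (suppXY f g) _).trans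
      (aux_moment hα hC hf hm)))
    rw [← lintegral_add_right _ (by fun_prop)]
    refine lintegral_mono fun x => ?_
    have hW : (1 : ℝ≥0∞) ≤ ENNReal.ofReal (1 + ‖x‖) := by
      rw [ENNReal.one_le_ofReal]; linarith [norm_nonneg x]
    have h0 : 0 < 1 + ‖x‖ := by positivity
    have := aux_pointwise hlam1 hlam2 hα ha hb hcc habc
      (MlocPair β f g x ^ (d : ℝ) / ENNReal.ofReal (f x))
      (MlocPair β f g x ^ (d : ℝ) / ENNReal.ofReal (g x)) _ hW
    rw [ENNReal.ofReal_mul (hf.2.1 x), ← ENNReal.ofReal_rpow_of_pos h0,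
      ← ENNReal.ofReal_rpow_of_pos h0, ← mul_add, mul_assoc, mul_assoc]
    rw [mul_assoc] at this
    gcongr
  · intro a' ha' ha1
    have hd' : (0 : ℝ) < d := by exact_mod_cast hd
    have ha0 : 0 < a' := lt_trans (by positivity) ha'
    rcases ha1.eq_or_lt with rfl | ha1
    · refine ⟨2 ^ α * (1 + C), fun f hf hm => ?_⟩
      refine (setLIntegral_le_lintegral _ _).trans (le_trans ?_ (aux_moment hα hC hf hm))
      refine lintegral_mono fun x => ENNReal.ofReal_le_ofReal ?_
      rw [Real.rpow_one]
      exact le_mul_of_one_le_right (hf.2.1 x)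
        (Real.one_le_rpow (by linarith [norm_nonneg x]) hα.le)
    · have h1a : 0 < 1 - a' := by linarith
      have hr : ((Module.finrank ℝ (Euc d) : ℕ) : ℝ) < α * a' / (1 - a') := by
        rw [finrank_euclideanSpace_fin, lt_div_iff₀ h1a]
        rw [div_lt_iff₀ (by positivity)] at ha'
        linarith
      have hfin := finite_integral_one_add_norm (μ := (volume : Measure (Euc d))) hr
      set K := ∫⁻ x : Euc d, ENNReal.ofReal ((1 + ‖x‖) ^ (-(α * a' / (1 - a')))) with hK
      refine ⟨2 ^ α * (1 + C) + K.toReal, fun f hf hm => ?_⟩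
      have hmeas : Measurable f := hf.1
      rw [ENNReal.ofReal_add (by positivity) ENNReal.toReal_nonneg,
        ENNReal.ofReal_toReal hfin.ne]
      refine (setLIntegral_le_lintegral _ _).trans
        (le_trans ?_ (add_le_add_left (aux_moment hα hC hf hm) K))
      rw [hK, ← lintegral_add_left (by fun_prop)]
      refine lintegral_mono fun x => ?_
      have h0 : 0 < 1 + ‖x‖ := by positivity
      rw [← ENNReal.ofReal_add (mul_nonneg (hf.2.1 x) (by positivity)) (by positivity)]
      exact ENNReal.ofReal_le_ofReal
        (aux_young ha0 ha1 (hf.2.1 x) (by linarith [norm_nonneg x]))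

end
end

section
/- Let a, b, c ∈ ℝ be fixed constants, and let k^L ≤ k^U be deterministic sequences of positive integers with k^L → ∞ and k^U/n → 0 as n → ∞. Then ∫₀¹ ∫₀¹ |B_{j+a, l+b, n+c−j−l}(s,t) − B_{j+a, n−j}(s) B_{l+b, n−l}(t)| ds dt ≤ ((jl)^{1/2}/n)(1 + o(1)) as n → ∞, uniformly for j, l ∈ {k^L, …, k^U}; that is, for every ε > 0 there exists N such that for all n ≥ N and all j, l ∈ {k^L, …, k^U}, the left-hand side is at most (1+ε)(jl)^{1/2}/n. -/
open MeasureTheory Filter Set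
open scoped ENNReal NNReal BigOperators Topology

noncomputable section

/-- The `Beta(p,q)` density. -/
def betaPdf (p q s : ℝ) : ℝ :=
  s ^ (p - 1) * (1 - s) ^ (q - 1) * Real.Gamma (p + q) / (Real.Gamma p * Real.Gamma q)

/-- The two-dimensional `Dirichlet(p,q,r)` density. -/
def dirPdf (p q r s t : ℝ) : ℝ :=
  if 0 < s ∧ 0 < t ∧ s + t < 1 then
    Real.Gamma (p + q + r) / (Real.Gamma p * Real.Gamma q * Real.Gamma r) *
      (s ^ (p - 1) * t ^ (q - 1) * (1 - s - t) ^ (r - 1))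
  else 0

/-! ### Auxiliary lemmas -/

lemma aux_integrable_of_lintegral {α : Type*} [MeasurableSpace α] {μ : Measure α} {F : α → ℝ}
    {v : ℝ} (hm : AEStronglyMeasurable F μ) (h0 : 0 ≤ᵐ[μ] F) (hv : 0 ≤ v)
    (h : ∫⁻ x, ENNReal.ofReal (F x) ∂μ = ENNReal.ofReal v) :
    Integrable F μ ∧ ∫ x, F x ∂μ = v := by
  refine ⟨⟨hm, ?_⟩, ?_⟩
  · rw [hasFiniteIntegral_iff_ofReal h0, h]
    exact ENNReal.ofReal_lt_top
  · rw [integral_eq_lintegral_of_nonneg_ae h0 hm, h, ENNReal.toReal_ofReal hv]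

/-- Lebesgue measure on the unit interval. -/
def muI : Measure ℝ := volume.restrict (Ioo (0 : ℝ) 1)

instance muI_fin : IsFiniteMeasure muI := by
  unfold muI; infer_instance

lemma muI_ae {P : ℝ → Prop} (h : ∀ s, 0 < s → s < 1 → P s) : ∀ᵐ s ∂muI, P s := by
  unfold muI
  exact ae_restrict_of_forall_mem measurableSet_Ioo (fun x hx => h x hx.1 hx.2)

lemma muI_prod_ae {P : ℝ × ℝ → Prop}
    (h : ∀ z : ℝ × ℝ, 0 < z.1 → z.1 < 1 → 0 < z.2 → z.2 < 1 → P z) :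
    ∀ᵐ z ∂(muI.prod muI), P z := by
  unfold muI
  rw [Measure.prod_restrict]
  refine ae_restrict_of_forall_mem (measurableSet_Ioo.prod measurableSet_Ioo) ?_
  rintro z ⟨h1, h2⟩
  exact h z h1.1 h1.2 h2.1 h2.2

lemma betaPdf_pos {p q s : ℝ} (hp : 0 < p) (hq : 0 < q) (hs : 0 < s) (hs1 : s < 1) :
    0 < betaPdf p q s := by
  unfold betaPdf
  have := Real.Gamma_pos_of_pos hp
  have := Real.Gamma_pos_of_pos hq
  have := Real.Gamma_pos_of_pos (add_pos hp hq)
  have : 0 < 1 - s := by linarith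
  positivity

lemma betaPdf_meas (p q : ℝ) : Measurable (betaPdf p q) := by
  unfold betaPdf
  fun_prop

lemma betaPdf_lintegral {p q : ℝ} (hp : 0 < p) (hq : 0 < q) :
    ∫⁻ s, ENNReal.ofReal (betaPdf p q s) ∂muI = 1 := by
  rw [← ProbabilityTheory.lintegral_betaPDF_eq_one hp hq, ProbabilityTheory.lintegral_betaPDF]
  unfold muI
  congr 1
  ext s
  congr 1
  unfold betaPdf ProbabilityTheory.beta
  have := (Real.Gamma_pos_of_pos hp).ne'
  have := (Real.Gamma_pos_of_pos hq).ne'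
  have := (Real.Gamma_pos_of_pos (add_pos hp hq)).ne'
  field_simp

lemma betaPdf_int {p q : ℝ} (hp : 0 < p) (hq : 0 < q) :
    Integrable (betaPdf p q) muI ∧ ∫ s, betaPdf p q s ∂muI = 1 := by
  apply aux_integrable_of_lintegral (betaPdf_meas p q).aestronglyMeasurable
  · exact muI_ae (fun s h1 h2 => (betaPdf_pos hp hq h1 h2).le)
  · norm_num
  · simpa using betaPdf_lintegral hp hq

lemma subst_scale {s : ℝ} (hs : 0 < s) (hs1 : s < 1) (G : ℝ → ℝ≥0∞)
    (hG : ∀ t, 1 - s ≤ t → G t = 0) :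
    ∫⁻ t, G t ∂muI = ∫⁻ v, ENNReal.ofReal (1 - s) * G ((1 - s) * v) ∂muI := by
  have h1 : 0 < 1 - s := by linarith
  have him : (fun v => (1 - s) * v) '' (Ioo (0 : ℝ) 1) = Ioo 0 (1 - s) := by
    rw [Set.image_mul_left_Ioo h1]; simp
  have := lintegral_image_eq_lintegral_abs_deriv_mul (s := Ioo (0 : ℝ) 1)
    (f := fun v => (1 - s) * v) (f' := fun _ => 1 - s) measurableSet_Ioo
    (fun x _ => by simpa using ((hasDerivAt_id x).const_mul (1 - s)).hasDerivWithinAt)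
    (fun x _ y _ h => mul_left_cancel₀ h1.ne' h) G
  rw [him, abs_of_pos h1] at this
  unfold muI
  rw [← this]
  rw [← lintegral_indicator measurableSet_Ioo, ← lintegral_indicator measurableSet_Ioo]
  congr 1
  ext t
  simp only [Set.indicator, mem_Ioo]
  by_cases ht : t < 1 - s
  · have : t < 1 := by linarith
    simp [ht, this]
  · simp [ht, hG t (not_lt.mp ht)]

lemma subst_mobius {v : ℝ} (hv : 0 < v) (hv1 : v < 1) (G : ℝ → ℝ≥0∞) :
    ∫⁻ t, G t ∂muI =
      ∫⁻ w, ENNReal.ofReal ((1 - v) / (1 - v * w) ^ 2) * G ((1 - v) * w / (1 - v * w)) ∂muI := by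
  have h1 : 0 < 1 - v := by linarith
  have hpos : ∀ w : ℝ, w ∈ Ioo (0 : ℝ) 1 → 0 < 1 - v * w := by
    intro w hw
    nlinarith [hw.1, hw.2]
  have him : (fun w => (1 - v) * w / (1 - v * w)) '' (Ioo (0 : ℝ) 1) = Ioo 0 1 := by
    ext s
    constructor
    · rintro ⟨w, hw, rfl⟩
      have := hpos w hw
      refine ⟨div_pos (mul_pos h1 hw.1) this, ?_⟩
      show (1 - v) * w / (1 - v * w) < 1
      rw [div_lt_one this]
      nlinarith [hw.2]
    · rintro ⟨h0, h2⟩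
      have hd : 0 < 1 - v + v * s := by positivity
      refine ⟨s / (1 - v + v * s), ⟨by positivity, ?_⟩, ?_⟩
      · rw [div_lt_one hd]; nlinarith
      · have : 1 - v * (s / (1 - v + v * s)) = (1 - v) / (1 - v + v * s) := by
          field_simp; ring
        show (1 - v) * (s / (1 - v + v * s)) / (1 - v * (s / (1 - v + v * s))) = s
        rw [this]
        field_simp
  have hder : ∀ w ∈ Ioo (0 : ℝ) 1, HasDerivWithinAt (fun w => (1 - v) * w / (1 - v * w))
      ((1 - v) / (1 - v * w) ^ 2) (Ioo (0 : ℝ) 1) w := by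
    intro w hw
    have hw' := hpos w hw
    have a1 : HasDerivAt (fun w => (1 - v) * w) (1 - v) w := by
      simpa using (hasDerivAt_id w).const_mul (1 - v)
    have a2 : HasDerivAt (fun w => 1 - v * w) (-v) w := by
      simpa using ((hasDerivAt_id w).const_mul v).const_sub 1
    have := (a1.div a2 hw'.ne').hasDerivWithinAt (s := Ioo (0 : ℝ) 1)
    convert! this using 1
    congr 1
    ring
  have hinj : InjOn (fun w => (1 - v) * w / (1 - v * w)) (Ioo (0 : ℝ) 1) := by
    intro x hx y hy h
    have hx' := hpos x hx
    have hy' := hpos y hy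
    simp only at h
    rw [div_eq_div_iff hx'.ne' hy'.ne'] at h
    have : (1 - v) * (x - y) = 0 := by linear_combination h
    rcases mul_eq_zero.mp this with h | h <;> linarith
  have := lintegral_image_eq_lintegral_abs_deriv_mul measurableSet_Ioo hder hinj G
  rw [him] at this
  unfold muI
  rw [this]
  refine setLIntegral_congr_fun measurableSet_Ioo ?_
  intro w hw
  have hw' := hpos w hw
  simp only
  rw [abs_of_pos (by positivity)]

lemma dirPdf_nonneg {p q r : ℝ} (hp : 0 < p) (hq : 0 < q) (hr : 0 < r) (s t : ℝ) :
    0 ≤ dirPdf p q r s t := by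
  unfold dirPdf
  split_ifs with h
  · have := Real.Gamma_pos_of_pos hp
    have := Real.Gamma_pos_of_pos hq
    have := Real.Gamma_pos_of_pos hr
    have := Real.Gamma_pos_of_pos (add_pos (add_pos hp hq) hr)
    have h1 := h.1
    have h2 := h.2.1
    have : 0 < 1 - s - t := by linarith [h.2.2]
    positivity
  · exact le_rfl

lemma dirPdf_meas (p q r : ℝ) : Measurable (fun z : ℝ × ℝ => dirPdf p q r z.1 z.2) := by
  unfold dirPdf
  refine Measurable.ite ?_ (by fun_prop) (by fun_prop)
  refine (measurableSet_lt measurable_const measurable_fst).inter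
    ((measurableSet_lt measurable_const measurable_snd).inter
      (measurableSet_lt (measurable_fst.add measurable_snd) measurable_const))

lemma dirPdf_zero (p q r : ℝ) {s t : ℝ} (h : 1 - s ≤ t) : dirPdf p q r s t = 0 := by
  unfold dirPdf
  rw [if_neg]
  rintro ⟨_, _, h3⟩
  linarith

lemma dir_factor {p q r s v : ℝ} (hp : 0 < p) (hq : 0 < q) (hr : 0 < r)
    (hs : 0 < s) (hs1 : s < 1) (hv : 0 < v) (hv1 : v < 1) :
    (1 - s) * dirPdf p q r s ((1 - s) * v) = betaPdf p (q + r) s * betaPdf q r v := by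
  have h1 : 0 < 1 - s := by linarith
  have h2 : 0 < 1 - v := by linarith
  unfold dirPdf betaPdf
  rw [if_pos ⟨hs, by positivity, by nlinarith⟩]
  have e : 1 - s - (1 - s) * v = (1 - s) * (1 - v) := by ring
  rw [e, Real.mul_rpow h1.le hv.le, Real.mul_rpow h1.le h2.le]
  have e2 : (1 - s) ^ (q + r - 1) = (1 - s) * ((1 - s) ^ (q - 1) * (1 - s) ^ (r - 1)) := by
    nth_rewrite 2 [← Real.rpow_one (1 - s)]
    rw [← Real.rpow_add h1, ← Real.rpow_add h1]
    congr 1; ring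
  rw [e2, ← add_assoc p q r]
  have := (Real.Gamma_pos_of_pos hp).ne'
  have := (Real.Gamma_pos_of_pos hq).ne'
  have := (Real.Gamma_pos_of_pos hr).ne'
  have := (Real.Gamma_pos_of_pos (add_pos hq hr)).ne'
  field_simp

lemma dirPdf_int {p q r : ℝ} (hp : 0 < p) (hq : 0 < q) (hr : 0 < r) :
    Integrable (fun z : ℝ × ℝ => dirPdf p q r z.1 z.2) (muI.prod muI) ∧
      ∫ z, dirPdf p q r z.1 z.2 ∂(muI.prod muI) = 1 := by
  apply aux_integrable_of_lintegral (dirPdf_meas p q r).aestronglyMeasurable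
  · exact Eventually.of_forall (fun z => dirPdf_nonneg hp hq hr _ _)
  · norm_num
  rw [lintegral_prod _ (dirPdf_meas p q r).ennreal_ofReal.aemeasurable]
  have : ∀ᵐ s ∂muI, ∫⁻ t, ENNReal.ofReal (dirPdf p q r s t) ∂muI
      = ENNReal.ofReal (betaPdf p (q + r) s) := by
    refine muI_ae fun s hs hs1 => ?_
    rw [subst_scale hs hs1 _ (fun t ht => by rw [dirPdf_zero _ _ _ ht]; simp)]
    have : ∀ᵐ v ∂muI, ENNReal.ofReal (1 - s) * ENNReal.ofReal (dirPdf p q r s ((1 - s) * v))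
        = ENNReal.ofReal (betaPdf p (q + r) s) * ENNReal.ofReal (betaPdf q r v) := by
      refine muI_ae fun v hv hv1 => ?_
      rw [← ENNReal.ofReal_mul (by linarith), dir_factor hp hq hr hs hs1 hv hv1,
        ENNReal.ofReal_mul (betaPdf_pos hp (add_pos hq hr) hs hs1).le]
    rw [lintegral_congr_ae this, lintegral_const_mul _ (betaPdf_meas _ _).ennreal_ofReal,
      betaPdf_lintegral hq hr, mul_one]
  rw [lintegral_congr_ae this, betaPdf_lintegral hp (add_pos hq hr)]
  simp

lemma chi_key {p q r w v A B Z : ℝ} (hA : 0 < A) (hB : 0 < B) (hZ : 0 < Z) (hv : 0 < v)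
    (hw : 0 < w) :
    (A / Z ^ 2) *
      (((A * w / Z) ^ (p - 1) * (B / Z) ^ (q + r - 1)) *
        (v ^ (q - 1) * A ^ (r - 1)) ^ 2) =
      (w ^ (p - 1) * B ^ (r - 1) * (v ^ (q - 1) * A ^ (r - 1 - 1))) *
       ((B / Z) * ((B / Z * v) ^ (q - 1) * (A / Z) ^ (p + r + 1 - 1))) := by
  obtain ⟨A, rfl⟩ : ∃ x, A = Real.exp x := ⟨_, (Real.exp_log hA).symm⟩
  obtain ⟨B, rfl⟩ : ∃ x, B = Real.exp x := ⟨_, (Real.exp_log hB).symm⟩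
  obtain ⟨Z, rfl⟩ : ∃ x, Z = Real.exp x := ⟨_, (Real.exp_log hZ).symm⟩
  obtain ⟨v, rfl⟩ : ∃ x, v = Real.exp x := ⟨_, (Real.exp_log hv).symm⟩
  obtain ⟨w, rfl⟩ : ∃ x, w = Real.exp x := ⟨_, (Real.exp_log hw).symm⟩
  simp only [← Real.exp_add, ← Real.exp_sub, ← Real.exp_mul, ← Real.exp_nat_mul]
  congr 1
  push_cast
  ring

lemma chi_pointwise {p q r w v : ℝ} (hp : 0 < p) (hq : 0 < q) (hr : 1 < r)
    (hw : 0 < w) (hw1 : w < 1) (hv : 0 < v) (hv1 : v < 1) :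
    ((1 - v) / (1 - v * w) ^ 2) *
      (betaPdf p (q + r) ((1 - v) * w / (1 - v * w)) * betaPdf q r v ^ 2 /
        ((1 - (1 - v) * w / (1 - v * w)) *
          betaPdf q (p + r + 1) ((1 - (1 - v) * w / (1 - v * w)) * v))) =
      ((q + r - 1) * (p + r) / ((p + q + r) * (r - 1))) *
        (betaPdf p r w * betaPdf q (r - 1) v) := by
  have h1 : 0 < 1 - v := by linarith
  have h2 : 0 < 1 - w := by linarith
  have h3 : 0 < 1 - v * w := by nlinarith
  have e1 : 1 - (1 - v) * w / (1 - v * w) = (1 - w) / (1 - v * w) := by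
    field_simp; ring
  have e2 : 1 - (1 - w) / (1 - v * w) * v = (1 - v) / (1 - v * w) := by
    have : (1 - w) / (1 - v * w) * v * (1 - v * w) = (1 - w) * v := by
      rw [div_mul_eq_mul_div, div_mul_cancel₀ _ h3.ne']
    rw [eq_div_iff h3.ne']
    linear_combination -this
  unfold betaPdf
  rw [e1, e2]
  have hr0 : 0 < r := by linarith
  have hr1 : 0 < r - 1 := by linarith
  have hqr : 0 < q + r - 1 := by linarith
  have g1 : Real.Gamma (q + (p + r + 1)) = (p + q + r) * Real.Gamma (p + q + r) := by
    rw [← Real.Gamma_add_one (by positivity)]; congr 1; ring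
  have g2 : Real.Gamma (p + r + 1) = (p + r) * Real.Gamma (p + r) :=
    Real.Gamma_add_one (by positivity)
  have g3 : Real.Gamma (q + r) = (q + r - 1) * Real.Gamma (q + r - 1) := by
    rw [← Real.Gamma_add_one hqr.ne']; congr 1; ring
  have g4 : Real.Gamma r = (r - 1) * Real.Gamma (r - 1) := by
    rw [← Real.Gamma_add_one hr1.ne']; congr 1; ring
  have g5 : Real.Gamma (p + (q + r)) = Real.Gamma (p + q + r) := by congr 1; ring
  have g6 : Real.Gamma (q + (r - 1)) = Real.Gamma (q + r - 1) := by congr 1; ring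
  rw [g1, g2, g5, g3, g6, g4]
  have k1 := (Real.Gamma_pos_of_pos hp).ne'
  have k2 := (Real.Gamma_pos_of_pos hq).ne'
  have k3 := (Real.Gamma_pos_of_pos hr1).ne'
  have k4 := (Real.Gamma_pos_of_pos hqr).ne'
  have k5 := (Real.Gamma_pos_of_pos (show 0 < p + r by positivity)).ne'
  have k6 := (Real.Gamma_pos_of_pos (show 0 < p + q + r by positivity)).ne'
  have key : ((1 - v) / (1 - v * w) ^ 2) *
      ((((1 - v) * w / (1 - v * w)) ^ (p - 1) * ((1 - w) / (1 - v * w)) ^ (q + r - 1)) *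
        (v ^ (q - 1) * (1 - v) ^ (r - 1)) ^ 2) =
      (w ^ (p - 1) * (1 - w) ^ (r - 1) * (v ^ (q - 1) * (1 - v) ^ (r - 1 - 1))) *
       (((1 - w) / (1 - v * w)) * (((1 - w) / (1 - v * w) * v) ^ (q - 1) *
        ((1 - v) / (1 - v * w)) ^ (p + r + 1 - 1))) := chi_key h1 h2 h3 hv hw
  have t1 : (0 : ℝ) < ((1 - w) / (1 - v * w) * v) ^ (q - 1) := by positivity
  have t2 : (0 : ℝ) < ((1 - v) / (1 - v * w)) ^ (p + r + 1 - 1) := by positivity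
  have t3 : (0 : ℝ) < (1 - w) / (1 - v * w) := by positivity
  generalize ((1 - w) / (1 - v * w) * v) ^ (q - 1) = A1 at *
  generalize ((1 - v) / (1 - v * w)) ^ (p + r + 1 - 1) = A2 at *
  generalize (1 - w) / (1 - v * w) = A3 at *
  generalize (1 - v) / (1 - v * w) ^ 2 = A4 at *
  generalize ((1 - v) * w / (1 - v * w)) ^ (p - 1) = A5 at *
  generalize A3 ^ (q + r - 1) = A6 at *
  generalize v ^ (q - 1) = A7 at *
  generalize (1 - v) ^ (r - 1) = A8 at *
  generalize w ^ (p - 1) = A9 at *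
  generalize (1 - w) ^ (r - 1) = A10 at *
  generalize (1 - v) ^ (r - 1 - 1) = A11 at *
  have s1 : q + r - 1 ≠ 0 := hqr.ne'
  have s2 : r - 1 ≠ 0 := hr1.ne'
  have s3 : p + r ≠ 0 := by positivity
  have s4 : p + q + r ≠ 0 := by positivity
  generalize q + r - 1 = B1 at *
  generalize r - 1 = B2 at *
  generalize p + r = B3 at *
  generalize p + q + r = B4 at *
  generalize Real.Gamma p = C1 at *
  generalize Real.Gamma q = C2 at *
  generalize Real.Gamma B1 = C3 at *
  generalize Real.Gamma B2 = C4 at *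
  generalize Real.Gamma B3 = C5 at *
  generalize Real.Gamma B4 = C6 at *
  field_simp
  linear_combination key

lemma chi_int {p q r : ℝ} (hp : 0 < p) (hq : 0 < q) (hr : 1 < r) :
    Integrable (fun z : ℝ × ℝ => dirPdf p q r z.1 z.2 ^ 2 /
        (betaPdf p (q + r) z.1 * betaPdf q (p + r + 1) z.2)) (muI.prod muI) ∧
      ∫ z, dirPdf p q r z.1 z.2 ^ 2 /
        (betaPdf p (q + r) z.1 * betaPdf q (p + r + 1) z.2) ∂(muI.prod muI) =
        (q + r - 1) * (p + r) / ((p + q + r) * (r - 1)) := by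
  have hr0 : 0 < r := by linarith
  have hr1 : 0 < r - 1 := by linarith
  have hqr : 0 < q + r - 1 := by linarith
  have hm : Measurable (fun z : ℝ × ℝ => dirPdf p q r z.1 z.2 ^ 2 /
        (betaPdf p (q + r) z.1 * betaPdf q (p + r + 1) z.2)) :=
    ((dirPdf_meas p q r).pow_const 2).div
      (((betaPdf_meas _ _).comp measurable_fst).mul ((betaPdf_meas _ _).comp measurable_snd))
  apply aux_integrable_of_lintegral hm.aestronglyMeasurable
  · refine muI_prod_ae fun z h1 h2 h3 h4 => ?_
    have := betaPdf_pos hp (add_pos hq hr0) h1 h2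
    have := betaPdf_pos (q := p + r + 1) hq (by positivity) h3 h4
    show 0 ≤ _
    positivity
  · positivity
  rw [lintegral_prod _ hm.ennreal_ofReal.aemeasurable]
  have step1 : ∀ᵐ s ∂muI, ∫⁻ t, ENNReal.ofReal (dirPdf p q r s t ^ 2 /
        (betaPdf p (q + r) s * betaPdf q (p + r + 1) t)) ∂muI
      = ∫⁻ v, ENNReal.ofReal (betaPdf p (q + r) s * betaPdf q r v ^ 2 /
        ((1 - s) * betaPdf q (p + r + 1) ((1 - s) * v))) ∂muI := by
    refine muI_ae fun s hs hs1 => ?_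
    rw [subst_scale hs hs1 _ (fun t ht => by rw [dirPdf_zero _ _ _ ht]; simp)]
    refine lintegral_congr_ae (muI_ae fun v hv hv1 => ?_)
    simp only
    have h1 : 0 < 1 - s := by linarith
    rw [← ENNReal.ofReal_mul h1.le]
    congr 1
    have f1 := dir_factor hp hq hr0 hs hs1 hv hv1
    have f2 : dirPdf p q r s ((1 - s) * v) =
        betaPdf p (q + r) s * betaPdf q r v / (1 - s) := by
      rw [← f1]; field_simp
    rw [f2]
    have b1 := (betaPdf_pos hp (add_pos hq hr0) hs hs1).ne'
    have b2 := (betaPdf_pos (s := (1 - s) * v) (q := p + r + 1) hq (by positivity)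
      (by positivity) (by nlinarith)).ne'
    field_simp
  rw [lintegral_congr_ae step1, lintegral_lintegral_swap]
  · have step2 : ∀ᵐ v ∂muI, ∫⁻ s, ENNReal.ofReal (betaPdf p (q + r) s * betaPdf q r v ^ 2 /
        ((1 - s) * betaPdf q (p + r + 1) ((1 - s) * v))) ∂muI =
        ENNReal.ofReal ((q + r - 1) * (p + r) / ((p + q + r) * (r - 1))) *
          ENNReal.ofReal (betaPdf q (r - 1) v) := by
      refine muI_ae fun v hv hv1 => ?_
      rw [subst_mobius hv hv1]
      have : ∀ᵐ w ∂muI, ENNReal.ofReal ((1 - v) / (1 - v * w) ^ 2) * ENNReal.ofReal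
        (betaPdf p (q + r) ((1 - v) * w / (1 - v * w)) * betaPdf q r v ^ 2 /
        ((1 - (1 - v) * w / (1 - v * w)) *
          betaPdf q (p + r + 1) ((1 - (1 - v) * w / (1 - v * w)) * v))) =
          (ENNReal.ofReal ((q + r - 1) * (p + r) / ((p + q + r) * (r - 1))) *
          ENNReal.ofReal (betaPdf q (r - 1) v)) * ENNReal.ofReal (betaPdf p r w) := by
        refine muI_ae fun w hw hw1 => ?_
        have h1 : 0 < 1 - v := by linarith
        rw [← ENNReal.ofReal_mul (by positivity), chi_pointwise hp hq hr hw hw1 hv hv1,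
          ← ENNReal.ofReal_mul (by positivity), ← ENNReal.ofReal_mul]
        · congr 1; ring
        · have := betaPdf_pos hq hr1 hv hv1
          positivity
      rw [lintegral_congr_ae this, lintegral_const_mul _ (betaPdf_meas _ _).ennreal_ofReal,
        betaPdf_lintegral hp hr0, mul_one]
    rw [lintegral_congr_ae step2, lintegral_const_mul _ (betaPdf_meas _ _).ennreal_ofReal,
        betaPdf_lintegral hq hr1, mul_one]
  · refine Measurable.aemeasurable ?_
    refine Measurable.ennreal_ofReal ?_
    refine Measurable.div ?_ ?_
    · exact ((betaPdf_meas _ _).comp measurable_fst).mul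
        (((betaPdf_meas _ _).comp measurable_snd).pow_const 2)
    · refine Measurable.mul (by fun_prop) ((betaPdf_meas _ _).comp (by fun_prop))

/-- The chi-square bound. -/
lemma dir_vs_h {p q r : ℝ} (hp : 0 < p) (hq : 0 < q) (hr : 1 < r) :
    ∫ z, |dirPdf p q r z.1 z.2 - betaPdf p (q + r) z.1 * betaPdf q (p + r + 1) z.2|
      ∂(muI.prod muI) ≤ Real.sqrt (q * (p + 1) / ((p + q + r) * (r - 1))) := by
  have hr0 : 0 < r := by linarith
  have hr1 : 0 < r - 1 := by linarith
  set lam := Real.sqrt (q * (p + 1) / ((p + q + r) * (r - 1))) with hlam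
  have hl : 0 < lam := Real.sqrt_pos.mpr (by positivity)
  have hl2 : lam ^ 2 = q * (p + 1) / ((p + q + r) * (r - 1)) := Real.sq_sqrt (by positivity)
  obtain ⟨iD, vD⟩ := dirPdf_int hp hq hr0
  obtain ⟨iC, vC⟩ := chi_int hp hq hr
  obtain ⟨i1, v1⟩ := betaPdf_int hp (add_pos hq hr0)
  obtain ⟨i2, v2⟩ := betaPdf_int (q := p + r + 1) hq (by positivity)
  have iH := i1.mul_prod i2
  have vH := integral_prod_mul (μ := muI) (ν := muI) (betaPdf p (q + r)) (betaPdf q (p + r + 1))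
  rw [v1, v2, one_mul] at vH
  have iU := ((iH.const_mul (lam / 2 + 1 / (2 * lam))).add (iC.const_mul (1 / (2 * lam)))).sub
    (iD.const_mul (1 / lam))
  calc _ ≤ ∫ z, ((lam / 2 + 1 / (2 * lam)) *
          (betaPdf p (q + r) z.1 * betaPdf q (p + r + 1) z.2) + 1 / (2 * lam) *
          (dirPdf p q r z.1 z.2 ^ 2 / (betaPdf p (q + r) z.1 * betaPdf q (p + r + 1) z.2)))
          - 1 / lam * dirPdf p q r z.1 z.2 ∂(muI.prod muI) := by
        refine integral_mono_ae (iD.sub iH).abs iU ?_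
        refine muI_prod_ae fun z h1 h2 h3 h4 => ?_
        have b1 := betaPdf_pos hp (add_pos hq hr0) h1 h2
        have b2 := betaPdf_pos (q := p + r + 1) hq (by positivity) h3 h4
        have hh := mul_pos b1 b2
        simp only
        generalize betaPdf p (q + r) z.1 * betaPdf q (p + r + 1) z.2 = h at *
        generalize dirPdf p q r z.1 z.2 = f at *
        have e : (lam / 2 + 1 / (2 * lam)) * h + 1 / (2 * lam) * (f ^ 2 / h) - 1 / lam * f
            - |f - h| = (|f - h| - lam * h) ^ 2 / (2 * lam * h) := by
          have : (|f - h| - lam * h) ^ 2 = (f - h) ^ 2 - 2 * |f - h| * lam * h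
              + lam ^ 2 * h ^ 2 := by rw [← sq_abs (f - h)]; ring
          rw [this]
          field_simp
          ring
        have : 0 ≤ (|f - h| - lam * h) ^ 2 / (2 * lam * h) := by positivity
        linarith
    _ = lam := by
        have iA : Integrable (fun z : ℝ × ℝ => (lam / 2 + 1 / (2 * lam)) *
          (betaPdf p (q + r) z.1 * betaPdf q (p + r + 1) z.2) + 1 / (2 * lam) *
          (dirPdf p q r z.1 z.2 ^ 2 / (betaPdf p (q + r) z.1 * betaPdf q (p + r + 1) z.2)))
          (muI.prod muI) := (iH.const_mul _).add (iC.const_mul _)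
        rw [integral_sub iA (iD.const_mul _),
          integral_add (iH.const_mul _) (iC.const_mul _),
          integral_const_mul, integral_const_mul, integral_const_mul, vH, vC, vD]
        have : (q + r - 1) * (p + r) / ((p + q + r) * (r - 1)) = 1 + lam ^ 2 := by
          rw [hl2]
          field_simp
          ring
        rw [this]
        field_simp
        ring

lemma rpow_sub_one_bound {v d : ℝ} {D : ℕ} (hv : 0 < v) (hv2 : v ≤ 2) (hd : 0 ≤ d)
    (hD : d ≤ D) : |v ^ d - 1| ≤ (D * 2 ^ D : ℝ) * |v - 1| := by
  have h1 : |v ^ d - 1| ≤ |v ^ D - 1| := by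
    rw [← Real.rpow_natCast v D]
    rcases le_total 1 v with h | h
    · have a1 : 1 ≤ v ^ d := Real.one_le_rpow h hd
      have a2 : v ^ d ≤ v ^ (D : ℝ) := Real.rpow_le_rpow_of_exponent_le h hD
      rw [abs_of_nonneg (by linarith), abs_of_nonneg (by linarith)]
      linarith
    · have a1 : v ^ d ≤ 1 := Real.rpow_le_one hv.le h hd
      have a2 : v ^ (D : ℝ) ≤ v ^ d := Real.rpow_le_rpow_of_exponent_ge hv h hD
      rw [abs_of_nonpos (by linarith), abs_of_nonpos (by linarith)]
      linarith
  refine h1.trans ?_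
  rw [← geom_sum_mul v D, abs_mul]
  gcongr
  rw [abs_of_nonneg (Finset.sum_nonneg fun i _ => by positivity)]
  calc ∑ i ∈ Finset.range D, v ^ i ≤ ∑ i ∈ Finset.range D, (2 : ℝ) ^ D := by
        refine Finset.sum_le_sum fun i hi => ?_
        calc v ^ i ≤ 2 ^ i := by gcongr
          _ ≤ 2 ^ D := pow_le_pow_right₀ (by norm_num) (Finset.mem_range.mp hi).le
    _ = _ := by simp

lemma beta_tilt {p x d s : ℝ} (hp : 0 < p) (hx : 0 < x) (hd : 0 ≤ d) (hs : 0 < s)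
    (hs1 : s < 1) :
    betaPdf p x s * ((1 - s) * ((p + x) / x)) ^ d =
      (((p + x) / x) ^ d * (Real.Gamma (p + x) * Real.Gamma (x + d) /
        (Real.Gamma x * Real.Gamma (p + x + d)))) * betaPdf p (x + d) s := by
  have h1 : 0 < 1 - s := by linarith
  have hxd : 0 < x + d := by linarith
  unfold betaPdf
  rw [Real.mul_rpow h1.le (by positivity)]
  have e : (1 - s) ^ (x + d - 1) = (1 - s) ^ (x - 1) * (1 - s) ^ d := by
    rw [← Real.rpow_add h1]; congr 1; ring
  rw [e, ← add_assoc p x d]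
  have := (Real.Gamma_pos_of_pos hp).ne'
  have := (Real.Gamma_pos_of_pos hx).ne'
  have := (Real.Gamma_pos_of_pos hxd).ne'
  have := (Real.Gamma_pos_of_pos (show 0 < p + x + d by linarith)).ne'
  field_simp

lemma beta_tilt1 {p x s : ℝ} (hp : 0 < p) (hx : 0 < x) (hs : 0 < s) (hs1 : s < 1) :
    betaPdf p x s * ((1 - s) * ((p + x) / x)) = betaPdf p (x + 1) s := by
  have := beta_tilt hp hx (zero_le_one) hs hs1
  rw [Real.rpow_one, Real.rpow_one, Real.Gamma_add_one hx.ne',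
    Real.Gamma_add_one (by positivity)] at this
  rw [this]
  have := (Real.Gamma_pos_of_pos hx).ne'
  have := (Real.Gamma_pos_of_pos (show 0 < p + x by linarith)).ne'
  field_simp

lemma beta_tilt2 {p x s : ℝ} (hp : 0 < p) (hx : 0 < x) (hs : 0 < s) (hs1 : s < 1) :
    betaPdf p x s * ((1 - s) * ((p + x) / x)) ^ 2 =
      ((x + 1) * (p + x) / (x * (p + x + 1))) * betaPdf p (x + 1 + 1) s := by
  have e1 := beta_tilt1 hp hx hs hs1
  have e2 := beta_tilt1 (x := x + 1) hp (by positivity) hs hs1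
  rw [← e2, ← e1]
  field_simp
  ring

lemma beta_dev {p x : ℝ} (hp : 0 < p) (hx : 0 < x) :
    Integrable (fun s => betaPdf p x s * |(1 - s) * ((p + x) / x) - 1|) muI ∧
    ∫ s, betaPdf p x s * |(1 - s) * ((p + x) / x) - 1| ∂muI ≤ Real.sqrt p / x := by
  set lam := Real.sqrt p / x with hlam
  have hl : 0 < lam := by have := Real.sqrt_pos.mpr hp; positivity
  have hl2 : lam ^ 2 = p / x ^ 2 := by rw [hlam, div_pow, Real.sq_sqrt hp.le]
  obtain ⟨i0, v0⟩ := betaPdf_int hp hx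
  obtain ⟨i1, v1⟩ := betaPdf_int (q := x + 1) hp (by positivity)
  obtain ⟨i2, v2⟩ := betaPdf_int (q := x + 1 + 1) hp (by positivity)
  have iA : Integrable (fun s => (lam / 2 + 1 / (2 * lam)) * betaPdf p x s + (1 / (2 * lam)) *
      (((x + 1) * (p + x) / (x * (p + x + 1))) * betaPdf p (x + 1 + 1) s)) muI :=
    (i0.const_mul _).add ((i2.const_mul _).const_mul _)
  have iU : Integrable (fun s => (lam / 2 + 1 / (2 * lam)) * betaPdf p x s + (1 / (2 * lam)) *
      (((x + 1) * (p + x) / (x * (p + x + 1))) * betaPdf p (x + 1 + 1) s)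
      - (1 / lam) * betaPdf p (x + 1) s) muI := iA.sub (i1.const_mul _)
  have hle : ∀ᵐ s ∂muI, betaPdf p x s * |(1 - s) * ((p + x) / x) - 1| ≤
      (lam / 2 + 1 / (2 * lam)) * betaPdf p x s + (1 / (2 * lam)) *
      (((x + 1) * (p + x) / (x * (p + x + 1))) * betaPdf p (x + 1 + 1) s)
      - (1 / lam) * betaPdf p (x + 1) s := by
    refine muI_ae fun s hs hs1 => ?_
    have hf := betaPdf_pos hp hx hs hs1
    rw [← beta_tilt2 hp hx hs hs1, ← beta_tilt1 hp hx hs hs1]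
    generalize (1 - s) * ((p + x) / x) = v
    generalize betaPdf p x s = f at *
    have e : (lam / 2 + 1 / (2 * lam)) * f + (1 / (2 * lam)) * (f * v ^ 2) - (1 / lam) * (f * v)
        - f * |v - 1| = f * (|v - 1| - lam) ^ 2 / (2 * lam) := by
      have : (|v - 1| - lam) ^ 2 = (v - 1) ^ 2 - 2 * |v - 1| * lam + lam ^ 2 := by
        rw [← sq_abs (v - 1)]; ring
      rw [this]
      field_simp
      ring
    have : 0 ≤ f * (|v - 1| - lam) ^ 2 / (2 * lam) := by positivity
    linarith
  have iF : Integrable (fun s => betaPdf p x s * |(1 - s) * ((p + x) / x) - 1|) muI := by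
    refine iU.mono' ?_ ?_
    · exact ((betaPdf_meas p x).mul (by fun_prop)).aestronglyMeasurable
    · filter_upwards [hle, muI_ae (P := fun s => 0 < betaPdf p x s)
        (fun s hs hs1 => betaPdf_pos hp hx hs hs1)] with s h1 h2
      rwa [Real.norm_of_nonneg (by positivity)]
  refine ⟨iF, (integral_mono_ae iF iU hle).trans ?_⟩
  rw [integral_sub iA (i1.const_mul _), integral_add (i0.const_mul _)
    ((i2.const_mul _).const_mul _), integral_const_mul, integral_const_mul, integral_const_mul,
    integral_const_mul, v0, v1, v2]
  have h3 : (x + 1) * (p + x) / (x * (p + x + 1)) ≤ 1 + lam ^ 2 := by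
    rw [hl2]
    have : (x + 1) * (p + x) / (x * (p + x + 1)) = 1 + p / (x * (p + x + 1)) := by
      field_simp; ring
    rw [this]
    gcongr
    nlinarith
  have h4 : 1 / (2 * lam) * ((x + 1) * (p + x) / (x * (p + x + 1)) * 1) ≤
      1 / (2 * lam) * (1 + lam ^ 2) := by
    rw [mul_one]
    gcongr
  have h5 : (lam / 2 + 1 / (2 * lam)) * 1 + 1 / (2 * lam) * (1 + lam ^ 2) - 1 / lam * 1 = lam := by
    field_simp; ring
  linarith

lemma beta_shift {p x d : ℝ} {D : ℕ} (hp : 0 < p) (hx : 0 < x) (hpx : p ≤ x) (hd : 0 ≤ d)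
    (hD : d ≤ D) :
    ∫ s, |betaPdf p x s - betaPdf p (x + d) s| ∂muI ≤
      2 * (D * 2 ^ D : ℝ) * (Real.sqrt p / x) := by
  obtain ⟨iF, vF⟩ := beta_dev hp hx
  obtain ⟨i0, v0⟩ := betaPdf_int hp hx
  obtain ⟨i1, v1⟩ := betaPdf_int (q := x + d) hp (by positivity)
  obtain ⟨κ, hκ⟩ : ∃ κ, κ = ((p + x) / x) ^ d * (Real.Gamma (p + x) * Real.Gamma (x + d) /
        (Real.Gamma x * Real.Gamma (p + x + d))) := ⟨_, rfl⟩
  have hE : ∫ s, |κ * betaPdf p (x + d) s - betaPdf p x s| ∂muI ≤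
      (D * 2 ^ D : ℝ) * (Real.sqrt p / x) := by
    calc _ ≤ ∫ s, (D * 2 ^ D : ℝ) * (betaPdf p x s * |(1 - s) * ((p + x) / x) - 1|) ∂muI := by
          refine integral_mono_ae ((i1.const_mul κ).sub i0).abs (iF.const_mul _) ?_
          refine muI_ae fun s hs hs1 => ?_
          have hf := betaPdf_pos hp hx hs hs1
          simp only
          rw [hκ, ← beta_tilt hp hx hd hs hs1]
          have h1 : 0 < 1 - s := by linarith
          have hv : 0 < (1 - s) * ((p + x) / x) := by positivity
          have hv2 : (1 - s) * ((p + x) / x) ≤ 2 := by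
            have : (p + x) / x ≤ 2 := by rw [div_le_iff₀ hx]; linarith
            have h0 : 0 < (p + x) / x := by positivity
            nlinarith
          have := rpow_sub_one_bound hv hv2 hd hD
          rw [← mul_sub_one, abs_mul, abs_of_pos hf]
          calc _ ≤ betaPdf p x s * ((D * 2 ^ D : ℝ) * |(1 - s) * ((p + x) / x) - 1|) := by gcongr
            _ = _ := by ring
      _ ≤ _ := by
          rw [integral_const_mul]
          gcongr
  have hk : |κ - 1| ≤ (D * 2 ^ D : ℝ) * (Real.sqrt p / x) := by
    refine le_trans ?_ hE
    have : κ - 1 = ∫ s, (κ * betaPdf p (x + d) s - betaPdf p x s) ∂muI := by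
      rw [integral_sub (i1.const_mul κ) i0, integral_const_mul, v0, v1, mul_one]
    rw [this]
    exact abs_integral_le_integral_abs
  have iB : Integrable (fun s => |κ * betaPdf p (x + d) s - betaPdf p x s|) muI :=
    ((i1.const_mul κ).sub i0).abs
  calc _ ≤ ∫ s, (|κ * betaPdf p (x + d) s - betaPdf p x s| + |κ - 1| * betaPdf p (x + d) s)
            ∂muI := by
        refine integral_mono_ae (i0.sub i1).abs (iB.add (i1.const_mul _)) ?_
        refine muI_ae fun s hs hs1 => ?_
        have hf := betaPdf_pos (q := x + d) hp (by positivity) hs hs1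
        simp only
        have e : |κ - 1| * betaPdf p (x + d) s = |κ * betaPdf p (x + d) s - betaPdf p (x + d) s| := by
          rw [← sub_one_mul, abs_mul, abs_of_pos hf]
        rw [e, abs_sub_comm (κ * betaPdf p (x + d) s) (betaPdf p x s)]
        exact abs_sub_le _ _ _
    _ ≤ _ := by
        rw [integral_add iB (i1.const_mul _), integral_const_mul, v1]
        linarith

lemma beta_diff {p x y z : ℝ} {D : ℕ} (hp : 0 < p) (hpz : p ≤ z) (hzx : z ≤ x) (hzy : z ≤ y)
    (hD : |x - y| ≤ D) :
    ∫ s, |betaPdf p x s - betaPdf p y s| ∂muI ≤ 2 * (D * 2 ^ D : ℝ) * (Real.sqrt p / z) := by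
  have hz : 0 < z := by linarith
  obtain ⟨hD1, hD2⟩ := abs_le.mp hD
  rcases le_total x y with h | h
  · have := beta_shift (D := D) (d := y - x) hp (hz.trans_le hzx) (hpz.trans hzx)
      (by linarith) (by linarith)
    rw [add_sub_cancel] at this
    refine this.trans ?_
    gcongr
  · have := beta_shift (D := D) (d := x - y) hp (hz.trans_le hzy) (hpz.trans hzy)
      (by linarith) (by linarith)
    rw [add_sub_cancel] at this
    simp_rw [abs_sub_comm (betaPdf p x _)]
    refine this.trans ?_
    gcongr

lemma main_bound {p q r x y z : ℝ} {D : ℕ} (hp : 0 < p) (hq : 0 < q) (hr : 1 < r)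
    (hpz : p ≤ z) (hqz : q ≤ z) (hx : z ≤ x) (hy : z ≤ y) (hqr : z ≤ q + r)
    (hpr : z ≤ p + r + 1) (hDx : |q + r - x| ≤ D) (hDy : |p + r + 1 - y| ≤ D) :
    (∫ s in Set.Ioo (0 : ℝ) 1, ∫ t in Set.Ioo (0 : ℝ) 1,
      |dirPdf p q r s t - betaPdf p x s * betaPdf q y t|) ≤
      Real.sqrt (q * (p + 1) / ((p + q + r) * (r - 1))) +
        2 * (D * 2 ^ D : ℝ) * ((Real.sqrt p + Real.sqrt q) / z) := by
  have hz : 0 < z := by linarith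
  obtain ⟨iD, vD⟩ := dirPdf_int hp hq (show 0 < r by linarith)
  obtain ⟨i1, v1⟩ := betaPdf_int (q := q + r) hp (by linarith)
  obtain ⟨i2, v2⟩ := betaPdf_int (q := p + r + 1) hq (by linarith)
  obtain ⟨j1, w1⟩ := betaPdf_int (q := x) hp (by linarith)
  obtain ⟨j2, w2⟩ := betaPdf_int (q := y) hq (by linarith)
  have iF := (iD.sub (j1.mul_prod j2)).abs
  have e := integral_prod _ iF
  simp only [Pi.sub_apply] at e
  have e' : (∫ s in Set.Ioo (0 : ℝ) 1, ∫ t in Set.Ioo (0 : ℝ) 1,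
      |dirPdf p q r s t - betaPdf p x s * betaPdf q y t|) =
      ∫ s, ∫ t, |dirPdf p q r s t - betaPdf p x s * betaPdf q y t| ∂muI ∂muI := rfl
  rw [e', ← e]
  have a1 := (iD.sub (i1.mul_prod i2)).abs
  have a2 := i1.mul_prod (i2.sub j2).abs
  have a3 := (i1.sub j1).abs.mul_prod j2
  calc _ ≤ ∫ ω, ((|dirPdf p q r ω.1 ω.2 - betaPdf p (q + r) ω.1 * betaPdf q (p + r + 1) ω.2| +
          betaPdf p (q + r) ω.1 * |betaPdf q (p + r + 1) ω.2 - betaPdf q y ω.2|) +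
          |betaPdf p (q + r) ω.1 - betaPdf p x ω.1| * betaPdf q y ω.2) ∂(muI.prod muI) := by
        refine integral_mono_ae iF ((a1.add a2).add a3) ?_
        refine muI_prod_ae fun ω h1 h2 h3 h4 => ?_
        have b1 := betaPdf_pos (q := q + r) hp (by linarith) h1 h2
        have b2 := betaPdf_pos (q := y) hq (by linarith) h3 h4
        simp only
        generalize dirPdf p q r ω.1 ω.2 = f
        generalize betaPdf p (q + r) ω.1 = A at *
        generalize betaPdf q (p + r + 1) ω.2 = B at *
        generalize betaPdf p x ω.1 = A' at *
        generalize betaPdf q y ω.2 = B' at *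
        have t1 : A * |B - B'| = |A * B - A * B'| := by rw [← mul_sub, abs_mul, abs_of_pos b1]
        have t2 : |A - A'| * B' = |A * B' - A' * B'| := by rw [← sub_mul, abs_mul, abs_of_pos b2]
        rw [t1, t2]
        have := abs_sub_le f (A * B) (A' * B')
        have := abs_sub_le (A * B) (A * B') (A' * B')
        linarith
    _ ≤ _ := by
        have a1' : Integrable (fun ω : ℝ × ℝ => |dirPdf p q r ω.1 ω.2 -
          betaPdf p (q + r) ω.1 * betaPdf q (p + r + 1) ω.2|) (muI.prod muI) := a1
        have a2' : Integrable (fun ω : ℝ × ℝ => betaPdf p (q + r) ω.1 *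
          |betaPdf q (p + r + 1) ω.2 - betaPdf q y ω.2|) (muI.prod muI) := a2
        have a3' : Integrable (fun ω : ℝ × ℝ => |betaPdf p (q + r) ω.1 - betaPdf p x ω.1| *
          betaPdf q y ω.2) (muI.prod muI) := a3
        have a4 : Integrable (fun ω : ℝ × ℝ => |dirPdf p q r ω.1 ω.2 -
          betaPdf p (q + r) ω.1 * betaPdf q (p + r + 1) ω.2| + betaPdf p (q + r) ω.1 *
          |betaPdf q (p + r + 1) ω.2 - betaPdf q y ω.2|) (muI.prod muI) := a1'.add a2'
        rw [integral_add a4 a3', integral_add a1' a2',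
          integral_prod_mul (betaPdf p (q + r))
            (fun t => |betaPdf q (p + r + 1) t - betaPdf q y t|),
          integral_prod_mul (fun s => |betaPdf p (q + r) s - betaPdf p x s|) (betaPdf q y),
          v1, w2]
        have c1 := dir_vs_h hp hq hr
        have c2 := beta_diff (D := D) hp hpz hqr hx hDx
        have c3 := beta_diff (D := D) hq hqz hpr hy hDy
        rw [add_div, mul_add (2 * (D * 2 ^ D : ℝ))]
        linarith

set_option maxHeartbeats 2000000 in
/-- Lemma: total-variation-type comparison of a Dirichlet density with the product of
its Beta marginals, uniformly over `j, l ∈ {k^L,…,k^U}`. -/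
theorem dirichlet_vs_product_beta_bound
    (a b c : ℝ) (kL kU : ℕ → ℕ)
    (hkL : Tendsto (fun n : ℕ => kL n) atTop atTop)
    (hkU : Tendsto (fun n : ℕ => (kU n : ℝ) / n) atTop (nhds 0)) :
    ∀ ε > (0 : ℝ), ∃ N : ℕ, ∀ n : ℕ, N ≤ n → ∀ j l : ℕ,
      kL n ≤ j → j ≤ kU n → kL n ≤ l → l ≤ kU n →
      (∫ s in Set.Ioo (0 : ℝ) 1, ∫ t in Set.Ioo (0 : ℝ) 1,
          |dirPdf ((j : ℝ) + a) ((l : ℝ) + b) ((n : ℝ) + c - j - l) s t -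
            betaPdf ((j : ℝ) + a) ((n : ℝ) - j) s *
              betaPdf ((l : ℝ) + b) ((n : ℝ) - l) t|) ≤
        (1 + ε) * Real.sqrt ((j : ℝ) * l) / n := by
  intro ε hε
  obtain ⟨δ, hδ⟩ : ∃ δ : ℝ, δ = min (1 / 2) (ε / 8) := ⟨_, rfl⟩
  have hδ0 : 0 < δ := by rw [hδ]; positivity
  have hδ1 : δ ≤ 1 / 2 := by rw [hδ]; exact min_le_left _ _
  have hδ2 : δ ≤ ε / 8 := by rw [hδ]; exact min_le_right _ _
  obtain ⟨M, hM⟩ : ∃ M : ℝ, M = |a| + |b| + |c| + 2 := ⟨_, rfl⟩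
  have hM0 : 0 < M := by rw [hM]; positivity
  obtain ⟨D, hD⟩ : ∃ D : ℕ, M ≤ D := exists_nat_ge M
  obtain ⟨K, hK⟩ : ∃ K : ℝ, K = 2 * (D * 2 ^ D : ℝ) := ⟨_, rfl⟩
  have hK0 : 0 ≤ K := by rw [hK]; positivity
  have hkLr : Tendsto (fun n : ℕ => (kL n : ℝ)) atTop atTop :=
    tendsto_natCast_atTop_atTop.comp hkL
  have E1 := hkLr.eventually_ge_atTop (M / δ)
  have E2 := hkLr.eventually_ge_atTop (8 * K ^ 2 / (ε / 4) ^ 2)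
  have E3 := hkU.eventually_le_const (show (0 : ℝ) < δ / 4 by positivity)
  have E4 := (tendsto_natCast_atTop_atTop (R := ℝ)).eventually_ge_atTop (M / (δ / 2))
  obtain ⟨N, hN⟩ := eventually_atTop.mp (E1.and (E2.and (E3.and E4)))
  refine ⟨N, fun n hn j l hj1 hj2 hl1 hl2 => ?_⟩
  obtain ⟨e1, e2, e3, e4⟩ := hN n hn
  have hn0 : (0 : ℝ) < n := lt_of_lt_of_le (by positivity) e4
  rw [div_le_iff₀ hn0] at e3
  rw [div_le_iff₀ (by positivity)] at e1 e2 e4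
  have hj1' : (kL n : ℝ) ≤ j := by exact_mod_cast hj1
  have hj2' : (j : ℝ) ≤ kU n := by exact_mod_cast hj2
  have hl1' : (kL n : ℝ) ≤ l := by exact_mod_cast hl1
  have hl2' : (l : ℝ) ≤ kU n := by exact_mod_cast hl2
  generalize (kL n : ℝ) = kl at *
  generalize (kU n : ℝ) = ku at *
  generalize (n : ℝ) = n' at *
  generalize (j : ℝ) = J at *
  generalize (l : ℝ) = L at *
  obtain ⟨ha1, ha2⟩ := abs_le.mp (le_refl |a|)
  obtain ⟨hb1, hb2⟩ := abs_le.mp (le_refl |b|)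
  obtain ⟨hc1, hc2⟩ := abs_le.mp (le_refl |c|)
  have na := abs_nonneg a
  have nb := abs_nonneg b
  have nc := abs_nonneg c
  have hJM : M ≤ δ * J := by nlinarith
  have hLM : M ≤ δ * L := by nlinarith
  have hJ0 : 0 < J := by
    by_contra h
    nlinarith
  have hL0 : 0 < L := by
    by_contra h
    nlinarith
  have hJ : 2 * M ≤ J := by nlinarith
  have hL : 2 * M ≤ L := by nlinarith
  have hδn : δ * n' ≤ n' / 2 := by nlinarith
  have hδn0 : 0 < δ * n' := by positivity
  have hmain := main_bound (p := J + a) (q := L + b) (r := n' + c - J - L) (x := n' - J)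
    (y := n' - L) (z := n' / 2) (D := D) (by linarith) (by linarith) (by linarith) (by linarith)
    (by linarith) (by linarith) (by linarith) (by linarith) (by linarith)
    (by rw [abs_le]; constructor <;> linarith) (by rw [abs_le]; constructor <;> linarith)
  refine hmain.trans ?_
  rw [← hK]
  have hJL : 0 < J * L := by positivity
  have B1 : Real.sqrt ((L + b) * (J + a + 1) /
      ((J + a + (L + b) + (n' + c - J - L)) * (n' + c - J - L - 1))) ≤
      (1 + ε / 2) * Real.sqrt (J * L) / n' := by
    have hrw : (1 + ε / 2) * Real.sqrt (J * L) / n' =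
        Real.sqrt (((1 + ε / 2) / n') ^ 2 * (J * L)) := by
      rw [Real.sqrt_mul (sq_nonneg ((1 + ε / 2) / n')), Real.sqrt_sq (by positivity)]
      ring
    rw [hrw]
    apply Real.sqrt_le_sqrt
    have h1δ : 0 < 1 - δ := by linarith
    calc _ ≤ (((1 + δ) * L) * ((1 + δ) * J)) / (((1 - δ) * n') * ((1 - δ) * n')) := by
          apply div_le_div₀
          · positivity
          · exact mul_le_mul (by linarith) (by linarith) (by linarith) (by positivity)
          · positivity
          · exact mul_le_mul (by linarith) (by linarith) (by positivity) (by linarith)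
      _ = ((1 + δ) / (1 - δ) / n') ^ 2 * (J * L) := by
          field_simp
      _ ≤ _ := by
          gcongr
          rw [div_le_iff₀ h1δ]
          nlinarith
  have B2 : ∀ P X Y : ℝ, 0 < X → P ≤ 2 * X → kl ≤ Y →
      2 * K * Real.sqrt P ≤ ε / 4 * Real.sqrt (X * Y) := by
    intro P X Y hX hP hY
    have r1 : 2 * K * Real.sqrt P = Real.sqrt ((2 * K) ^ 2 * P) := by
      rw [Real.sqrt_mul (by positivity), Real.sqrt_sq (by positivity)]
    have r2 : ε / 4 * Real.sqrt (X * Y) = Real.sqrt ((ε / 4) ^ 2 * (X * Y)) := by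
      rw [Real.sqrt_mul (sq_nonneg (ε / 4)), Real.sqrt_sq (by positivity)]
    rw [r1, r2]
    apply Real.sqrt_le_sqrt
    calc (2 * K) ^ 2 * P ≤ (2 * K) ^ 2 * (2 * X) := by gcongr
      _ = (8 * K ^ 2) * X := by ring
      _ ≤ (kl * (ε / 4) ^ 2) * X := by gcongr
      _ ≤ (Y * (ε / 4) ^ 2) * X := by gcongr
      _ = _ := by ring
  have B3 := B2 (J + a) J L hJ0 (by linarith) hl1'
  have B4 := B2 (L + b) L J hL0 (by linarith) hj1'
  rw [mul_comm L J] at B4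
  have B5 : K * ((Real.sqrt (J + a) + Real.sqrt (L + b)) / (n' / 2)) ≤
      ε / 2 * Real.sqrt (J * L) / n' := by
    have : K * ((Real.sqrt (J + a) + Real.sqrt (L + b)) / (n' / 2)) =
        (2 * K * Real.sqrt (J + a) + 2 * K * Real.sqrt (L + b)) / n' := by
      field_simp
    rw [this]
    gcongr
    linarith
  have : (1 + ε) * Real.sqrt (J * L) / n' = (1 + ε / 2) * Real.sqrt (J * L) / n' +
      ε / 2 * Real.sqrt (J * L) / n' := by ring
  rw [this]
  exact add_le_add B1 B5

end
end
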